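/- arXiv:1504.01926 — 4 statements merged into one kernel-verified Lean document; each statement's English description precedes it below -/
import Mathlib

section
/- There exists L* > 1 such that: (i) for all L ≥ L* and all T ∈ 𝓜, if ψ ∈ 𝒟_L then ℒ_T ψ ∈ 𝒟_L; and (ii) for every L > L* there exists N(L) ∈ ℕ such that for every sequence (T_i)_{i≥1} ⊂ 𝓜 with transfer operators ℒ_i, every ψ ∈ 𝒟_L, and every k ≥ N(L), one has ℒ_k ⋯ ℒ_1 ψ ∈ 𝒟_{L*}. -/
open MeasureTheory Filter Topology Set UniformConvergence

noncomputable section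

instance : Fact ((0:ℝ) < 1) := ⟨zero_lt_one⟩

/-- The circle `𝕊 = ℝ/ℤ`. -/
abbrev Circle1 : Type := AddCircle (1 : ℝ)

/-- A `C²` expanding circle map with expansion `≥ lam` and `‖T''‖_∞ ≤ Astar`,
encoded by a lift `F : ℝ → ℝ` satisfying `F (x+1) = F x + deg`. -/
structure CM (lam Astar : ℝ) where
  F : ℝ → ℝ
  deg : ℤ
  lift_add_one : ∀ x : ℝ, F (x + 1) = F x + deg
  contDiff : ContDiff ℝ 2 F
  expanding : ∀ x : ℝ, lam ≤ deriv F x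
  second_bound : ∀ x : ℝ, |deriv (deriv F) x| ≤ Astar

namespace CM

variable {lam Astar : ℝ}

/-- The induced map on the circle. -/
def toMap (T : CM lam Astar) : Circle1 → Circle1 :=
  fun x => (↑(T.F ((AddCircle.equivIco 1 0 x : ℝ))) : Circle1)

/-- The derivative of `T`, as a function on the circle. -/
def dmap (T : CM lam Astar) : Circle1 → ℝ :=
  fun x => deriv T.F ((AddCircle.equivIco 1 0 x : ℝ))

end CM

/-- The `C¹` distance on the space of maps. -/
def dC1 {lam Astar : ℝ} (T₁ T₂ : CM lam Astar) : ℝ :=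
  (⨆ x : Circle1, dist (T₁.toMap x) (T₂.toMap x)) + (⨆ x : Circle1, |T₁.dmap x - T₂.dmap x|)

/-- The transfer operator `ℒ_T h (x) = ∑_{T y = x} h y / T' y`. -/
def transfer {lam Astar : ℝ} (T : CM lam Astar) (h : Circle1 → ℝ) : Circle1 → ℝ :=
  fun x => ∑' y : {y : Circle1 // T.toMap y = x}, h y / T.dmap y

/-- Iterated transfer operators `ℒ_k ⋯ ℒ_1` of the sequence `T_1, T_2, …` (`Ts i = T_i`). -/
def transferIter {lam Astar : ℝ} (Ts : ℕ → CM lam Astar) : ℕ → (Circle1 → ℝ) → (Circle1 → ℝ)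
  | 0, h => h
  | (k+1), h => transfer (Ts (k+1)) (transferIter Ts k h)

/-- Composition `T_k ∘ ⋯ ∘ T_1` as circle maps. -/
def mapIter {lam Astar : ℝ} (Ts : ℕ → CM lam Astar) : ℕ → Circle1 → Circle1
  | 0 => id
  | (k+1) => (Ts (k+1)).toMap ∘ mapIter Ts k

/-- Composition of the lifts `F_k ∘ ⋯ ∘ F_1`. -/
def liftIter {lam Astar : ℝ} (Ts : ℕ → CM lam Astar) : ℕ → ℝ → ℝ
  | 0 => id
  | (k+1) => (Ts (k+1)).F ∘ liftIter Ts k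

/-- A real representative of `z`. -/
def zrep (z : Circle1) : ℝ := (AddCircle.equivIco 1 0 z : ℝ)

/-- The coordinate on the cut circle `J_z = 𝕊 ∖ {z}`. -/
def arcCoord (z x : Circle1) : ℝ := ((AddCircle.equivIoc 1 (zrep z) x : ℝ))

/-- `|x − y|_z`: the length of the subarc of `J_z` connecting `x` and `y`. -/
def arcDist (z x y : Circle1) : ℝ := |arcCoord z x - arcCoord z y|

/-- `g` is Lipschitz on `J_z = 𝕊 ∖ {z}` with constant `L`. -/
def LipOnArc (z : Circle1) (L : ℝ) (g : Circle1 → ℝ) : Prop :=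
  ∀ x y : Circle1, x ≠ z → y ≠ z → |g x - g y| ≤ L * arcDist z x y

/-- A probability density w.r.t. the Haar–Lebesgue measure `𝔪` on the circle. -/
def IsProbDensity (ψ : Circle1 → ℝ) : Prop :=
  Integrable ψ volume ∧ (∫ x : Circle1, ψ x) = 1 ∧ ∀ x, 0 ≤ ψ x

/-- The class `𝒟_L`: positive probability densities whose logarithm is Lipschitz
with constant `L` on `J_z` for some `z`. -/
def memD (L : ℝ) (ψ : Circle1 → ℝ) : Prop :=
  IsProbDensity ψ ∧ (∀ x, 0 < ψ x) ∧ ∃ z : Circle1, LipOnArc z L (fun x => Real.log (ψ x))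

/-- The `L¹(𝔪)` norm. -/
def l1norm (h : Circle1 → ℝ) : ℝ := ∫ x : Circle1, |h x|

/-- The supremum norm. -/
def supNorm (h : Circle1 → ℝ) : ℝ := ⨆ x : Circle1, |h x|

/-- The Lipschitz constant of `h` (w.r.t. the metric of the circle). -/
def lipConst (h : Circle1 → ℝ) : ℝ :=
  sInf {L : ℝ | 0 ≤ L ∧ ∀ x y : Circle1, |h x - h y| ≤ L * dist x y}

/-- The Lipschitz norm `‖h‖_Lip = Lip(h) + ‖h‖_∞`. -/
def lipNorm (h : Circle1 → ℝ) : ℝ := lipConst h + supNorm h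

/-- `ρ` is the density of the SRB measure of `T`: the density of a `T`-invariant
probability measure equivalent to `𝔪`. -/
def IsSRBDensity {lam Astar : ℝ} (T : CM lam Astar) (ρ : Circle1 → ℝ) : Prop :=
  IsProbDensity ρ ∧ (∀ᵐ x : Circle1, 0 < ρ x) ∧
    Measure.map T.toMap (volume.withDensity (fun x => ENNReal.ofReal (ρ x))) =
      volume.withDensity (fun x => ENNReal.ofReal (ρ x))

section QDS

variable {lam Astar : ℝ}

/-- `x_{n,k} = T_{n,k} ∘ ⋯ ∘ T_{n,1}` for a triangular array. -/
def arrIter (Tarr : ℕ → ℕ → CM lam Astar) (n : ℕ) : ℕ → Circle1 → Circle1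
  | 0 => id
  | (k+1) => (Tarr n (k+1)).toMap ∘ arrIter Tarr n k

/-- `ℒ_{n,k} ⋯ ℒ_{n,1}` for a triangular array. -/
def arrTransfer (Tarr : ℕ → ℕ → CM lam Astar) (n : ℕ) : ℕ → (Circle1 → ℝ) → (Circle1 → ℝ)
  | 0, h => h
  | (k+1), h => transfer (Tarr n (k+1)) (arrTransfer Tarr n k h)

/-- `f_{n,k} = f ∘ T_{n,k} ∘ ⋯ ∘ T_{n,1}` evaluated at `x`. -/
def fnk (Tarr : ℕ → ℕ → CM lam Astar) (f : Circle1 → ℝ) (n k : ℕ) (x : Circle1) : ℝ :=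
  f (arrIter Tarr n k x)

/-- `ζₙ(x,t) = n⁻¹ (∑_{k<⌊nt⌋} f_{n,k}(x) + {nt}·f_{n,⌊nt⌋}(x))`. -/
def zetaP (Tarr : ℕ → ℕ → CM lam Astar) (f : Circle1 → ℝ) (n : ℕ) (x : Circle1) (t : ℝ) : ℝ :=
  (n : ℝ)⁻¹ * ((∑ k ∈ Finset.range ⌊(n : ℝ) * t⌋₊, fnk Tarr f n k x) +
    Int.fract ((n : ℝ) * t) * fnk Tarr f n ⌊(n : ℝ) * t⌋₊ x)

/-- `ξₙ(x,t) = √n ζₙ(x,t) − √n μ(ζₙ(·,t))` for a measure `μ`. -/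
def xiP (Tarr : ℕ → ℕ → CM lam Astar) (f : Circle1 → ℝ) (μ : Measure Circle1) (n : ℕ)
    (x : Circle1) (t : ℝ) : ℝ :=
  Real.sqrt n * zetaP Tarr f n x t - Real.sqrt n * ∫ y, zetaP Tarr f n y t ∂μ

/-- The Hölder continuity (exponent `η`) of the curve `γ` on `[0,1]`, w.r.t. `d_{C¹}`. -/
def HolderCurve (η : ℝ) (γ : ℝ → CM lam Astar) : Prop :=
  ∃ H : ℝ, ∀ s ∈ Icc (0:ℝ) 1, ∀ t ∈ Icc (0:ℝ) 1, dC1 (γ s) (γ t) ≤ H * |s - t| ^ η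

/-- The convergence-rate condition `sup_n n^η sup_t d_{C¹}(T_{n,⌊nt⌋}, γ_t) < ∞`. -/
def ArrayApprox (η : ℝ) (γ : ℝ → CM lam Astar) (Tarr : ℕ → ℕ → CM lam Astar) : Prop :=
  ∃ M : ℝ, ∀ n : ℕ, 1 ≤ n → ∀ t ∈ Icc (0:ℝ) 1,
    (n : ℝ) ^ η * dC1 (Tarr n ⌊(n : ℝ) * t⌋₊) (γ t) ≤ M

end QDS

/-- The path space: functions `[0,1] → ℝ` with the topology of uniform convergence;
continuous paths (with the supremum metric) embed isometrically. -/
abbrev PathSpace : Type := (Icc (0:ℝ) 1) →ᵤ ℝ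

instance : MeasurableSpace PathSpace := borel PathSpace

/-- A function `[0,1] → ℝ` (given as a function on `ℝ`) as a point of the path space. -/
def pathOf (g : ℝ → ℝ) : PathSpace := UniformFun.ofFun (fun t => g t)

/-- Evaluation of a path at time `t` (clamped to `[0,1]`). -/
def evalPath (t : ℝ) (ω : PathSpace) : ℝ := UniformFun.toFun ω (projIcc 0 1 zero_le_one t)


section Extra

variable {lam Astar : ℝ}

/-- `μ(ζₙ(·,t))` for the measure with density `ρ` w.r.t. `𝔪`. -/
def zetaMean (Tarr : ℕ → ℕ → CM lam Astar) (f : Circle1 → ℝ) (ρ : Circle1 → ℝ)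
    (n : ℕ) (t : ℝ) : ℝ :=
  ∫ y : Circle1, zetaP Tarr f n y t * ρ y

/-- `𝔪(ζₙ(·,t))`, the mean w.r.t. the Lebesgue measure. -/
def zetaMeanM (Tarr : ℕ → ℕ → CM lam Astar) (f : Circle1 → ℝ) (n : ℕ) (t : ℝ) : ℝ :=
  ∫ y : Circle1, zetaP Tarr f n y t

/-- `ξₙ(x,t) = √n ζₙ(x,t) − √n μ(ζₙ(·,t))`, where `μ` has density `ρ`. -/
def xiD (Tarr : ℕ → ℕ → CM lam Astar) (f : Circle1 → ℝ) (ρ : Circle1 → ℝ)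
    (n : ℕ) (x : Circle1) (t : ℝ) : ℝ :=
  Real.sqrt n * zetaP Tarr f n x t - Real.sqrt n * zetaMean Tarr f ρ n t

end Extra

/-- The σ-algebra `𝔉_t` on the path space, generated by the evaluations at times `s ∈ [0,t]`. -/
def pathFiltration (t : ℝ) : MeasurableSpace PathSpace :=
  ⨆ (s : ℝ) (_ : 0 ≤ s ∧ s ≤ t), MeasurableSpace.comap (evalPath s) (borel ℝ)

/-- The process `M_t(ω) = A(ω(t)) − A(ω(0)) − ½∫₀ᵗ σ̂ₛ²·A''(ω(s)) ds`. -/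
def MGproc (σ2 : ℝ → ℝ) (A : ℝ → ℝ) (t : ℝ) (ω : PathSpace) : ℝ :=
  A (evalPath t ω) - A (evalPath 0 ω) -
    (1/2) * ∫ s in (0:ℝ)..t, σ2 s * deriv (deriv A) (evalPath s ω)

/-- `P` solves the martingale problem on `C⁰([0,1],ℝ)` for the generator `½σ̂ₜ² d²/dx²`,
started at `0`:  `P` is a probability measure, concentrated on continuous paths starting at `0`,
and for every `A ∈ C_c^∞(ℝ)` the process `MGproc σ2 A` is a `P`-martingale w.r.t. the
natural filtration `𝔉_t`.  -/
def SolvesMartingaleProblem (σ2 : ℝ → ℝ) (P : Measure PathSpace) : Prop :=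
  IsProbabilityMeasure P ∧
  P {ω : PathSpace | evalPath 0 ω = 0} = 1 ∧
  P {ω : PathSpace | Continuous (UniformFun.toFun ω)} = 1 ∧
  ∀ A : ℝ → ℝ, ContDiff ℝ (⊤ : ℕ∞) A → HasCompactSupport A →
    (∀ t ∈ Icc (0:ℝ) 1, Integrable (MGproc σ2 A t) P) ∧
    (∀ t ∈ Icc (0:ℝ) 1, @Measurable PathSpace ℝ (pathFiltration t) _ (MGproc σ2 A t)) ∧
    (∀ s ∈ Icc (0:ℝ) 1, ∀ t ∈ Icc (0:ℝ) 1, s ≤ t →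
      P[MGproc σ2 A t | pathFiltration s] =ᵐ[P] MGproc σ2 A s)

end

theorem coe_eq_iff (x y : ℝ) : ((x : Circle1) = (y : Circle1)) ↔ ∃ n : ℤ, x = y + n := by
  rw [← sub_eq_zero, ← AddCircle.coe_sub, AddCircle.coe_eq_zero_iff]
  constructor
  · rintro ⟨n, hn⟩
    refine ⟨n, ?_⟩
    simp at hn
    linarith
  · rintro ⟨n, hn⟩
    refine ⟨n, ?_⟩
    simp
    linarith

theorem coe_add_int (x : ℝ) (n : ℤ) : ((x + n : ℝ) : Circle1) = x :=
  (coe_eq_iff _ _).2 ⟨n, rfl⟩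

theorem rep_spec (x : ℝ) : ∃ n : ℤ, ((AddCircle.equivIco 1 0 (x : Circle1) : ℝ)) = x + n := by
  have h : (((AddCircle.equivIco 1 0 (x : Circle1) : ℝ)) : Circle1) = x := AddCircle.coe_equivIco
  exact (coe_eq_iff _ _).1 h

section Main
variable {lam Astar : ℝ}

theorem F_diff (T : CM lam Astar) : Differentiable ℝ T.F :=
  T.contDiff.differentiable (by norm_num)

theorem dF_diff (T : CM lam Astar) : Differentiable ℝ (deriv T.F) := by
  have h : ContDiff ℝ (1 + 1) T.F := by
    have := T.contDiff
    norm_num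
    exact this
  exact ((contDiff_succ_iff_deriv.1 h).2.2).differentiable (by norm_num)

theorem F_add_int (T : CM lam Astar) (x : ℝ) (n : ℤ) : T.F (x + n) = T.F x + n * T.deg := by
  induction n using Int.induction_on with
  | zero => simp
  | succ i ih =>
    have := T.lift_add_one (x + i)
    push_cast at ih ⊢
    rw [← add_assoc, this, ih]; ring
  | pred i ih =>
    have := T.lift_add_one (x + (-i - 1))
    push_cast at ih ⊢
    have e : x + (-(i:ℝ) - 1) + 1 = x + -i := by ring
    rw [e, ih] at this
    linarith

theorem dF_add_int (T : CM lam Astar) (x : ℝ) (n : ℤ) : deriv T.F (x + n) = deriv T.F x := by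
  have h : (fun y => T.F (y + n)) = fun y => T.F y + n * T.deg := by
    funext y; exact F_add_int T y n
  have h2 := congrArg (fun f => deriv f x) h
  simpa [deriv_comp_add_const] using h2

theorem toMap_coe (T : CM lam Astar) (x : ℝ) : T.toMap (x : Circle1) = (T.F x : Circle1) := by
  obtain ⟨n, hn⟩ := rep_spec x
  unfold CM.toMap
  rw [hn, F_add_int]
  exact (coe_eq_iff _ _).2 ⟨n * T.deg, by push_cast; rfl⟩

theorem dmap_coe (T : CM lam Astar) (x : ℝ) : T.dmap (x : Circle1) = deriv T.F x := by
  obtain ⟨n, hn⟩ := rep_spec x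
  unfold CM.dmap
  rw [hn, dF_add_int]

theorem F_expand (T : CM lam Astar) {x y : ℝ} (h : x ≤ y) : lam * (y - x) ≤ T.F y - T.F x :=
  mul_sub_le_image_sub_of_le_deriv (F_diff T) T.expanding h

theorem F_strictMono (hlam : 1 < lam) (T : CM lam Astar) : StrictMono T.F := by
  intro x y h
  have := F_expand T h.le
  nlinarith

theorem F_surj (hlam : 1 < lam) (T : CM lam Astar) : Function.Surjective T.F := by
  intro t
  apply mem_range_of_exists_le_of_exists_ge (F_diff T).continuous
  · refine ⟨-|t - T.F 0|, ?_⟩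
    have := F_expand T (x := -|t - T.F 0|) (y := 0) (by simp)
    nlinarith [neg_abs_le (t - T.F 0), abs_nonneg (t - T.F 0)]
  · refine ⟨|t - T.F 0|, ?_⟩
    have := F_expand T (x := 0) (y := |t - T.F 0|) (by simp)
    nlinarith [le_abs_self (t - T.F 0), abs_nonneg (t - T.F 0)]

theorem deg_pos (hlam : 1 < lam) (T : CM lam Astar) : 0 < T.deg := by
  have h := F_expand T (x := 0) (y := 0 + 1) (by simp)
  rw [T.lift_add_one] at h
  have : (0:ℝ) < T.deg := by linarith
  exact_mod_cast this

theorem exists_inv (hlam : 1 < lam) (T : CM lam Astar) :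
    ∃ G : ℝ → ℝ, (∀ t, T.F (G t) = t) ∧ (∀ x, G (T.F x) = x) := by
  choose G hG using F_surj hlam T
  exact ⟨G, hG, fun x => (F_strictMono hlam T).injective (hG _)⟩

theorem transfer_coe (hlam : 1 < lam) (T : CM lam Astar) (d : ℕ) (hd : T.deg = d) {G : ℝ → ℝ}
    (hG : ∀ t, T.F (G t) = t) (hG' : ∀ x, G (T.F x) = x) (ψ : Circle1 → ℝ) (t : ℝ) :
    transfer T ψ (t : Circle1) =
      ∑ j ∈ Finset.range d, ψ (G (t + j) : ℝ) / deriv T.F (G (t + j)) := by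
  have hd0 : 0 < (d : ℤ) := hd ▸ deg_pos hlam T
  let e : Fin d → {y : Circle1 // T.toMap y = (t : Circle1)} := fun j =>
    ⟨((G (t + (j : ℕ)) : ℝ) : Circle1), by
      rw [toMap_coe, hG]
      exact (coe_eq_iff _ _).2 ⟨(j : ℕ), by push_cast; rfl⟩⟩
  have he : Function.Bijective e := by
    constructor
    · intro i j hij
      have h := congrArg Subtype.val hij
      obtain ⟨n, hn⟩ := (coe_eq_iff _ _).1 h
      have h2 := congrArg T.F hn
      rw [F_add_int, hG, hG, hd] at h2
      have h3 : ((i : ℕ) : ℤ) = (j : ℕ) + n * d := by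
        have : ((i : ℕ) : ℝ) = (j : ℕ) + n * d := by push_cast at h2; linarith
        exact_mod_cast this
      have hi := i.2
      have hj := j.2
      have hn0 : n = 0 := by
        have h4 : n < 1 := by
          by_contra hc
          have : (1 : ℤ) ≤ n := by omega
          nlinarith
        have h5 : -1 < n := by
          by_contra hc
          have : n ≤ -1 := by omega
          nlinarith
        omega
      subst hn0
      ext
      simp at h3
      omega
    · rintro ⟨y, hy⟩
      obtain ⟨r, rfl⟩ := QuotientAddGroup.mk_surjective y
      change T.toMap (r : Circle1) = _ at hy
      rw [toMap_coe] at hy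
      obtain ⟨m, hm⟩ := (coe_eq_iff _ _).1 hy
      have hmod := Int.emod_nonneg m hd0.ne'
      have hlt := Int.emod_lt_of_pos m hd0
      refine ⟨⟨(m % d).toNat, by omega⟩, ?_⟩
      apply Subtype.ext
      change ((G (t + ((m % d).toNat : ℕ)) : ℝ) : Circle1) = (r : Circle1)
      refine (coe_eq_iff _ _).2 ⟨-(m / d), ?_⟩
      rw [← hG' (r + _), F_add_int, hm, hd]
      congr 1
      have h1 : (((m % d).toNat : ℕ) : ℝ) = ((m % d : ℤ) : ℝ) := by
        have := Int.toNat_of_nonneg hmod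
        exact_mod_cast this
      rw [h1]
      have h2 : ((d * (m / d) + m % d : ℤ) : ℝ) = (m : ℝ) := by rw [Int.mul_ediv_add_emod]
      push_cast at h2 ⊢
      linarith
  unfold transfer
  rw [← (Equiv.ofBijective e he).tsum_eq, tsum_fintype, ← Fin.sum_univ_eq_sum_range
    (fun j => ψ (G (t + j) : ℝ) / deriv T.F (G (t + j)))]
  refine Finset.sum_congr rfl fun j _ => ?_
  simp only [Equiv.ofBijective_apply, e]
  rw [dmap_coe]

theorem integrable_circle {g : Circle1 → ℝ} {a : ℝ}
    (h : IntegrableOn (fun t : ℝ => g t) (Ioc a (a + 1))) : Integrable g := by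
  have h1 : Integrable (fun s : Ioc a (a + 1) => g ((s : ℝ) : Circle1))
      (Measure.comap Subtype.val volume) := by
    unfold IntegrableOn at h
    rw [← map_comap_subtype_coe measurableSet_Ioc,
      (MeasurableEmbedding.subtype_coe measurableSet_Ioc).integrable_map_iff] at h
    exact h
  have h2 := (AddCircle.measurePreserving_equivIoc 1 (a := a)).integrable_comp_of_integrable h1
  refine h2.congr (ae_of_all _ fun x => ?_)
  simp only [Function.comp]
  rw [AddCircle.coe_equivIoc]

theorem transfer_density (hlam : 1 < lam) (T : CM lam Astar) {ψ : Circle1 → ℝ}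
    (hi : Integrable ψ) :
    Integrable (transfer T ψ) ∧ ∫ x, transfer T ψ x = ∫ x, ψ x := by
  obtain ⟨G, hG, hG'⟩ := exists_inv hlam T
  obtain ⟨d, hd⟩ := Int.eq_ofNat_of_zero_le (deg_pos hlam T).le
  have hmono := F_strictMono hlam T
  set b := T.F 0 with hb
  set h : ℝ → ℝ := fun s => ψ (G s : ℝ) / deriv T.F (G s) with hh
  have himg : T.F '' (Ioc 0 (0 + 1)) = Ioc b (b + d) := by
    have hb1 : T.F (0 + 1) = b + d := by rw [T.lift_add_one, hd]; simp [hb]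
    ext s
    constructor
    · rintro ⟨x, hx, rfl⟩
      exact ⟨hmono hx.1, hb1 ▸ hmono.monotone hx.2⟩
    · intro hs
      refine ⟨G s, ⟨?_, ?_⟩, hG s⟩
      · rw [← hmono.lt_iff_lt, hG]; exact hs.1
      · rw [← hmono.le_iff_le, hG, hb1]; exact hs.2
  have hder : ∀ x ∈ Ioc (0:ℝ) (0 + 1), HasDerivWithinAt T.F (deriv T.F x) (Ioc 0 (0 + 1)) x :=
    fun x _ => ((F_diff T) x).hasDerivAt.hasDerivWithinAt
  have hpos : ∀ x, 0 < deriv T.F x := fun x => by linarith [T.expanding x]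
  have hcan : (fun x => |deriv T.F x| • h (T.F x)) = fun x : ℝ => ψ (x : Circle1) := by
    funext x
    simp only [hh, hG', smul_eq_mul, abs_of_pos (hpos x)]
    field_simp [(hpos x).ne']
  have hψ : IntegrableOn (fun x : ℝ => ψ (x : Circle1)) (Ioc 0 (0 + 1)) :=
    (AddCircle.measurePreserving_mk 1 0).integrable_comp_of_integrable hi
  have hint : IntegrableOn h (Ioc b (b + d)) := by
    rw [← himg, integrableOn_image_iff_integrableOn_abs_deriv_smul measurableSet_Ioc hder
      hmono.injective.injOn, hcan]
    exact hψ
  have hval : ∫ s in Ioc b (b + d), h s = ∫ x, ψ x := by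
    rw [← himg, integral_image_eq_integral_abs_deriv_smul measurableSet_Ioc hder
      hmono.injective.injOn, hcan]
    exact AddCircle.integral_preimage 1 0 ψ
  have hII : ∀ j < d, IntervalIntegrable h volume (b + (j : ℕ)) (b + ((j + 1 : ℕ) : ℕ)) := by
    intro j hj
    rw [intervalIntegrable_iff_integrableOn_Ioc_of_le (by push_cast; linarith)]
    refine hint.mono_set (Ioc_subset_Ioc ?_ ?_)
    · have : (0:ℝ) ≤ j := by positivity
      linarith
    · have : ((j + 1 : ℕ) : ℝ) ≤ d := by exact_mod_cast hj
      linarith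
  have hII' : ∀ j < d, IntervalIntegrable (fun t => h (t + (j : ℕ))) volume b (b + 1) := by
    intro j hj
    have := (hII j hj).comp_add_right (j : ℝ)
    have e : b + ((j + 1 : ℕ) : ℝ) - j = b + 1 := by push_cast; ring
    rw [e, add_sub_cancel_right] at this
    exact this
  have htr : (fun t : ℝ => transfer T ψ (t : Circle1)) =
      fun t => ∑ j ∈ Finset.range d, h (t + (j : ℕ)) := by
    funext t
    exact transfer_coe hlam T d hd hG hG' ψ t
  constructor
  · apply integrable_circle (a := b)
    rw [htr]
    refine integrable_finsetSum _ fun j hj => ?_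
    have := hII' j (Finset.mem_range.1 hj)
    rwa [intervalIntegrable_iff_integrableOn_Ioc_of_le (by linarith)] at this
  · rw [← AddCircle.integral_preimage 1 b, ← hval, htr,
      ← intervalIntegral.integral_of_le (by linarith),
      intervalIntegral.integral_finsetSum (fun j hj => hII' j (Finset.mem_range.1 hj)),
      ← intervalIntegral.integral_of_le (by simp)]
    have := intervalIntegral.sum_integral_adjacent_intervals (f := h) (μ := volume)
      (a := fun j : ℕ => b + (j : ℝ)) (n := d) hII
    simp only [Nat.cast_zero, add_zero] at this
    rw [← this]
    refine Finset.sum_congr rfl fun j _ => ?_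
    rw [intervalIntegral.integral_comp_add_right]
    congr 1
    push_cast; ring

theorem logdF_lip (hlam : 1 < lam) (T : CM lam Astar) (x y : ℝ) :
    |Real.log (deriv T.F x) - Real.log (deriv T.F y)| ≤ Astar / lam * |x - y| := by
  have hpos : ∀ x, 0 < deriv T.F x := fun x => by linarith [T.expanding x]
  have := convex_univ.norm_image_sub_le_of_norm_deriv_le (𝕜 := ℝ)
    (f := fun x => Real.log (deriv T.F x)) (C := Astar / lam) (x := y) (y := x)
    (fun x _ => ((dF_diff T) x).log (hpos x).ne') (fun x _ => ?_) (mem_univ _) (mem_univ _)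
  · simpa using this
  · rw [deriv.log ((dF_diff T) x) (hpos x).ne', Real.norm_eq_abs, abs_div, abs_of_pos (hpos x)]
    exact div_le_div₀ ((abs_nonneg _).trans (T.second_bound x)) (T.second_bound x) (by linarith)
      (T.expanding x)

theorem G_lip (hlam : 1 < lam) (T : CM lam Astar) {G : ℝ → ℝ}
    (hG : ∀ t, T.F (G t) = t) (s t : ℝ) : |G s - G t| ≤ |s - t| / lam := by
  rw [le_div_iff₀ (by linarith)]
  rcases le_total (G s) (G t) with h | h
  · have := F_expand T h
    rw [hG, hG] at this
    rw [abs_sub_comm, abs_of_nonneg (sub_nonneg.2 h), abs_sub_comm]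
    linarith [le_abs_self (t - s)]
  · have := F_expand T h
    rw [hG, hG] at this
    rw [abs_of_nonneg (sub_nonneg.2 h)]
    linarith [le_abs_self (s - t)]

theorem log_sum_le {d : ℕ} (hd : 0 < d) {u v : ℕ → ℝ} (hu : ∀ j, 0 < u j) (hv : ∀ j, 0 < v j)
    {c : ℝ} (h : ∀ j < d, Real.log (u j) - Real.log (v j) ≤ c) :
    Real.log (∑ j ∈ Finset.range d, u j) - Real.log (∑ j ∈ Finset.range d, v j) ≤ c := by
  have hne : (Finset.range d).Nonempty := Finset.nonempty_range_iff.2 hd.ne'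
  have hU : 0 < ∑ j ∈ Finset.range d, u j := Finset.sum_pos (fun j _ => hu j) hne
  have hV : 0 < ∑ j ∈ Finset.range d, v j := Finset.sum_pos (fun j _ => hv j) hne
  rw [sub_le_iff_le_add, Real.log_le_iff_le_exp hU, Real.exp_add, Real.exp_log hV, Finset.mul_sum]
  refine Finset.sum_le_sum fun j hj => ?_
  have := h j (Finset.mem_range.1 hj)
  rw [sub_le_iff_le_add, Real.log_le_iff_le_exp (hu j), Real.exp_add, Real.exp_log (hv j)] at this
  exact this

theorem coe_zrep (z : Circle1) : ((zrep z : ℝ) : Circle1) = z := AddCircle.coe_equivIco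

theorem arcCoord_coe (z : Circle1) {x : ℝ} (hx : x ∈ Ioo (zrep z) (zrep z + 1)) :
    arcCoord z (x : Circle1) = x :=
  AddCircle.equivIoc_coe_of_mem (Ioo_subset_Ioc_self hx)

theorem coe_arcCoord (z x : Circle1) : ((arcCoord z x : ℝ) : Circle1) = x :=
  AddCircle.coe_equivIoc

theorem arcCoord_mem (z : Circle1) {x : Circle1} (hx : x ≠ z) :
    arcCoord z x ∈ Ioo (zrep z) (zrep z + 1) := by
  have h : arcCoord z x ∈ Ioc (zrep z) (zrep z + 1) := (AddCircle.equivIoc 1 (zrep z) x).2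
  refine ⟨h.1, lt_of_le_of_ne h.2 fun he => hx ?_⟩
  rw [← coe_arcCoord z x, he, ← coe_zrep z]
  simpa [coe_zrep] using coe_add_int (zrep z) 1

theorem coe_ne (z : Circle1) {x : ℝ} (hx : x ∈ Ioo (zrep z) (zrep z + 1)) : (x : Circle1) ≠ z := by
  intro h
  rw [← coe_zrep z] at h
  obtain ⟨n, hn⟩ := (coe_eq_iff _ _).1 h
  have h1 : (0:ℝ) < n := by linarith [hx.1]
  have h2 : (n:ℝ) < 1 := by linarith [hx.2]
  have h1' : (0:ℤ) < n := by exact_mod_cast h1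
  have h2' : n < (1:ℤ) := by exact_mod_cast h2
  omega

theorem memD_step (hlam : 1 < lam) (T : CM lam Astar) {L : ℝ} (hL : 0 ≤ L)
    {ψ : Circle1 → ℝ} (h : memD L ψ) : memD (L / lam + Astar / lam / lam) (transfer T ψ) := by
  obtain ⟨⟨hi, hi1, -⟩, hpos, z, hz⟩ := h
  obtain ⟨G, hG, hG'⟩ := exists_inv hlam T
  obtain ⟨d, hd⟩ := Int.eq_ofNat_of_zero_le (deg_pos hlam T).le
  have hd0 : 0 < d := by have := deg_pos hlam T; omega
  have hmono := F_strictMono hlam T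
  have hFpos : ∀ x, 0 < deriv T.F x := fun x => by linarith [T.expanding x]
  have htr := transfer_coe hlam T d hd hG hG' ψ
  have hterm : ∀ s : ℝ, 0 < ψ (G s : ℝ) / deriv T.F (G s) := fun s => div_pos (hpos _) (hFpos _)
  have hp : ∀ x, 0 < transfer T ψ x := by
    intro x
    obtain ⟨r, rfl⟩ := QuotientAddGroup.mk_surjective x
    change 0 < transfer T ψ (r : Circle1)
    rw [htr]
    exact Finset.sum_pos (fun j _ => hterm _) (Finset.nonempty_range_iff.2 hd0.ne')
  obtain ⟨hI, hI1⟩ := transfer_density hlam T hi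
  refine ⟨⟨hI, hI1.trans hi1, fun x => (hp x).le⟩, hp, ((T.F (zrep z) : ℝ) : Circle1), ?_⟩
  set w : Circle1 := ((T.F (zrep z) : ℝ) : Circle1) with hw
  obtain ⟨n, hn⟩ : ∃ n : ℤ, zrep w = T.F (zrep z) + n := rep_spec _
  -- location of the preimages
  have hloc : ∀ x, x ≠ w → ∀ j < d,
      G (arcCoord w x - n + (j : ℕ)) ∈ Ioo (zrep z) (zrep z + 1) := by
    intro x hx j hj
    have hm := arcCoord_mem w hx
    rw [hn] at hm
    have hj1 : ((j + 1 : ℕ) : ℝ) ≤ d := by exact_mod_cast hj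
    push_cast at hj1
    have hj0 : (0:ℝ) ≤ j := by positivity
    constructor
    · rw [← hmono.lt_iff_lt, hG]; linarith [hm.1]
    · rw [← hmono.lt_iff_lt, hG, T.lift_add_one, hd]
      push_cast
      linarith [hm.2]
  have hval : ∀ x, transfer T ψ x = ∑ j ∈ Finset.range d,
      ψ (G (arcCoord w x - n + (j : ℕ)) : ℝ) / deriv T.F (G (arcCoord w x - n + (j : ℕ))) := by
    intro x
    rw [← htr]
    congr 1
    have := coe_add_int (arcCoord w x) (-n)
    rw [coe_arcCoord] at this
    refine this.symm.trans ?_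
    congr 1
    push_cast; ring
  have key : ∀ x y, x ≠ w → y ≠ w → Real.log (transfer T ψ x) - Real.log (transfer T ψ y) ≤
      (L / lam + Astar / lam / lam) * arcDist w x y := by
    intro x y hx hy
    rw [hval x, hval y]
    refine log_sum_le hd0 (fun j => hterm _) (fun j => hterm _) fun j hj => ?_
    have hlx := hloc x hx j hj
    have hly := hloc y hy j hj
    have hg := G_lip hlam T hG (arcCoord w x - n + (j : ℕ)) (arcCoord w y - n + (j : ℕ))
    have e : arcCoord w x - n + (j : ℕ) - (arcCoord w y - n + (j : ℕ)) =
      arcCoord w x - arcCoord w y := by ring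
    rw [e] at hg
    have h1 := hz _ _ (coe_ne z hlx) (coe_ne z hly)
    unfold arcDist at h1 ⊢
    rw [arcCoord_coe z hlx, arcCoord_coe z hly] at h1
    set p := G (arcCoord w x - n + (j : ℕ))
    set q := G (arcCoord w y - n + (j : ℕ))
    have h2 := logdF_lip hlam T p q
    rw [Real.log_div (hpos _).ne' (hFpos _).ne', Real.log_div (hpos _).ne' (hFpos _).ne']
    have hA : 0 ≤ Astar := (abs_nonneg _).trans (T.second_bound 0)
    have hA' : 0 ≤ Astar / lam := div_nonneg hA (by linarith)
    have h3 := mul_le_mul_of_nonneg_left hg hL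
    have h4 := mul_le_mul_of_nonneg_left hg hA'
    have h5 := (abs_le.1 h1).2
    have h6 := (abs_le.1 h2).1
    have e2 : (L / lam + Astar / lam / lam) * |arcCoord w x - arcCoord w y| =
      L * (|arcCoord w x - arcCoord w y| / lam) +
        Astar / lam * (|arcCoord w x - arcCoord w y| / lam) := by ring
    rw [e2]
    linarith
  intro x y hx hy
  rw [abs_le]
  have k1 := key x y hx hy
  have k2 := key y x hy hx
  have e : arcDist w y x = arcDist w x y := abs_sub_comm _ _
  rw [e] at k2
  constructor <;> linarith

theorem memD_mono {L L' : ℝ} (h : L ≤ L') {ψ : Circle1 → ℝ} (hψ : memD L ψ) : memD L' ψ := by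
  obtain ⟨h1, h2, z, hz⟩ := hψ
  exact ⟨h1, h2, z, fun x y hx hy => (hz x y hx hy).trans
    (mul_le_mul_of_nonneg_right h (abs_nonneg _))⟩

theorem memD_iter (hlam : 1 < lam) (hA : 0 < Astar) (Ts : ℕ → CM lam Astar) {L : ℝ} (hL : 0 ≤ L)
    {ψ : Circle1 → ℝ} (h : memD L ψ) (k : ℕ) :
    memD (L * (1 / lam) ^ k + Astar / (lam * (lam - 1))) (transferIter Ts k ψ) := by
  have hl : 0 < lam := by linarith
  have hl1 : 0 < lam - 1 := by linarith
  induction k with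
  | zero =>
    refine memD_mono ?_ h
    have : 0 < Astar / (lam * (lam - 1)) := by positivity
    simp [this.le]
  | succ k ih =>
    refine memD_mono (le_of_eq ?_) (memD_step hlam (Ts (k + 1)) (by positivity) ih)
    rw [pow_succ]
    field_simp
    ring

end Main

/-- Lemma `lem:D_stability` (i)–(ii).  There exists `L* > 1` such that
(i) `ℒ_T 𝒟_L ⊆ 𝒟_L` for all `L ≥ L*` and `T ∈ 𝓜`, and (ii) for every `L > L*` there is `N(L)`
such that `ℒ_k ⋯ ℒ_1 𝒟_L ⊆ 𝒟_{L*}` for every `k ≥ N(L)` and every sequence of maps of `𝓜`. -/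
theorem statement1 {lam Astar : ℝ} (hlam : 1 < lam) (hA : 0 < Astar) :
    ∃ Lstar : ℝ, 1 < Lstar ∧
      (∀ L : ℝ, Lstar ≤ L → ∀ (T : CM lam Astar) (ψ : Circle1 → ℝ),
        memD L ψ → memD L (transfer T ψ)) ∧
      (∀ L : ℝ, Lstar < L → ∃ N : ℕ,
        ∀ (Ts : ℕ → CM lam Astar) (ψ : Circle1 → ℝ), memD L ψ →
          ∀ k : ℕ, N ≤ k → memD Lstar (transferIter Ts k ψ)) := by
  have hl : 0 < lam := by linarith
  have hl1 : 0 < lam - 1 := by linarith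
  have hC : 0 < Astar / (lam * (lam - 1)) := by positivity
  refine ⟨2 + Astar / (lam * (lam - 1)), by linarith, ?_, ?_⟩
  · intro L hL T ψ h
    have hL0 : 0 ≤ L := by linarith
    refine memD_mono ?_ (memD_step hlam T hL0 h)
    have h1 : Astar / (lam * (lam - 1)) ≤ L := by linarith
    rw [div_le_iff₀ (by positivity)] at h1
    rw [div_div, div_add_div _ _ hl.ne' (by positivity), div_le_iff₀ (by positivity)]
    nlinarith [mul_le_mul_of_nonneg_left h1 hl.le]
  · intro L hL
    have hL0 : 0 < L := by linarith
    obtain ⟨N, hN⟩ := exists_pow_lt_of_lt_one (show 0 < 2 / L by positivity)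
      (show 1 / lam < 1 by rw [div_lt_one hl]; exact hlam)
    refine ⟨N, fun Ts ψ h k hk => memD_mono ?_ (memD_iter hlam hA Ts hL0.le h k)⟩
    have h1 : (1 / lam) ^ k ≤ (1 / lam) ^ N :=
      pow_le_pow_of_le_one (by positivity) (by rw [div_le_one hl]; exact hlam.le) hk
    have h2 : L * (1 / lam) ^ k ≤ L * (2 / L) :=
      mul_le_mul_of_nonneg_left (h1.trans hN.le) hL0.le
    rw [mul_div_cancel₀ _ hL0.ne'] at h2
    linarith
end

section
/- There exists a constant C > 0, depending only on λ and A*, such that for every sequence (T_i)_{i≥1} ⊂ 𝓜 with transfer operators ℒ_i, every k ≥ 1, and every Lipschitz continuous h : 𝕊 → ℝ: (1) ‖ℒ_k ⋯ ℒ_1 1‖_∞ ≤ C; (2) ‖ℒ_k ⋯ ℒ_1 h‖_∞ ≤ C‖h‖_∞; (3) ‖ℒ_k ⋯ ℒ_1 h‖_Lip ≤ C‖h‖_Lip; and (4) the Lasota–Yorke inequality ‖ℒ_k ⋯ ℒ_1 h‖_Lip ≤ C λ^{−k} ‖h‖_Lip + C‖h‖_∞ holds. -/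
open MeasureTheory Filter Topology Set UniformConvergence

/-- Inverse-branch data: `ψ` is the inverse of a lift of degree `D`. -/
structure InvB (ψ ψ' : ℝ → ℝ) (D : ℕ) (μ A : ℝ) : Prop where
  der : ∀ x, HasDerivAt ψ (ψ' x) x
  pos : ∀ x, 0 < ψ' x
  le : ∀ x, ψ' x ≤ μ
  per : ∀ x, ψ (x + D) = ψ x + 1
  logLip : ∀ x y, |Real.log (ψ' x) - Real.log (ψ' y)| ≤ A * |x - y|

namespace InvB

theorem lip {ψ ψ' : ℝ → ℝ} {D : ℕ} {μ A : ℝ} (B : InvB ψ ψ' D μ A) (x y : ℝ) :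
    |ψ x - ψ y| ≤ μ * |x - y| := by
  have := Convex.norm_image_sub_le_of_norm_hasDerivWithin_le (f := ψ) (f' := ψ') (s := Set.univ)
    (C := μ) (x := y) (y := x) (fun z _ => (B.der z).hasDerivWithinAt)
    (fun z _ => by rw [Real.norm_eq_abs, abs_of_pos (B.pos z)]; exact B.le z)
    convex_univ (Set.mem_univ _) (Set.mem_univ _)
  simpa [Real.norm_eq_abs] using this

theorem per_mul {ψ ψ' : ℝ → ℝ} {D : ℕ} {μ A : ℝ} (B : InvB ψ ψ' D μ A) (x : ℝ) (n : ℕ) :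
    ψ (x + D * n) = ψ x + n := by
  induction n with
  | zero => simp
  | succ n ih =>
    have := B.per (x + D * n)
    push_cast
    rw [show x + D * ((n:ℝ) + 1) = x + D * n + D by ring, this, ih]; ring

theorem per_int {ψ ψ' : ℝ → ℝ} {D : ℕ} {μ A : ℝ} (B : InvB ψ ψ' D μ A) (x : ℝ) (n : ℤ) :
    ψ (x + D * n) = ψ x + n := by
  obtain ⟨m, rfl | rfl⟩ := n.eq_nat_or_neg
  · exact_mod_cast B.per_mul x m
  · have := B.per_mul (x + D * ((-(m:ℤ) : ℤ) : ℝ)) m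
    push_cast at this ⊢
    rw [show x + D * -(m:ℝ) + D * m = x by ring] at this
    linarith

theorem comp {ψ ψ' : ℝ → ℝ} {D : ℕ} {μ A : ℝ} (B : InvB ψ ψ' D μ A)
    {φ φ' : ℝ → ℝ} {d : ℕ} {ν a : ℝ} (hA : 0 ≤ A) (E : InvB φ φ' d ν a) :
    InvB (fun x => ψ (φ x)) (fun x => ψ' (φ x) * φ' x) (D * d) (μ * ν) (A * ν + a) where
  der x := (B.der (φ x)).comp x (E.der x)
  pos x := mul_pos (B.pos _) (E.pos _)
  le x := mul_le_mul (B.le _) (E.le _) (E.pos _).le ((B.pos (φ x)).le.trans (B.le _))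
  per x := by
    have := E.per_mul x D
    push_cast
    rw [show x + (D:ℝ) * d = x + d * D by ring, this, B.per]
  logLip x y := by
    rw [Real.log_mul (B.pos _).ne' (E.pos _).ne', Real.log_mul (B.pos _).ne' (E.pos _).ne']
    have h1 := B.logLip (φ x) (φ y)
    have h2 := E.logLip x y
    have h3 := mul_le_mul_of_nonneg_left (E.lip x y) hA
    calc _ = |(Real.log (ψ' (φ x)) - Real.log (ψ' (φ y)))
              + (Real.log (φ' x) - Real.log (φ' y))| := by congr 1; ring
      _ ≤ _ := abs_add_le _ _
      _ ≤ _ := by nlinarith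

theorem mono {ψ ψ' : ℝ → ℝ} {D : ℕ} {μ A ν a : ℝ} (B : InvB ψ ψ' D μ A) (h : μ ≤ ν) (h' : A ≤ a) :
    InvB ψ ψ' D ν a where
  der := B.der
  pos := B.pos
  le x := (B.le x).trans h
  per := B.per
  logLip x y := (B.logLip x y).trans (mul_le_mul_of_nonneg_right h' (abs_nonneg _))

theorem le_exp {ψ ψ' : ℝ → ℝ} {D : ℕ} {μ A : ℝ} (B : InvB ψ ψ' D μ A) (hA : 0 ≤ A) {x y : ℝ}
    (h : |x - y| ≤ 1) : ψ' x ≤ Real.exp A * ψ' y := by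
  have h1 := (le_abs_self _).trans (B.logLip x y)
  have h2 : Real.log (ψ' x) ≤ A + Real.log (ψ' y) := by nlinarith
  have h3 := Real.exp_le_exp.2 h2
  rwa [Real.exp_add, Real.exp_log (B.pos _), Real.exp_log (B.pos _)] at h3

theorem sum_le {ψ ψ' : ℝ → ℝ} {D : ℕ} {μ A : ℝ} (B : InvB ψ ψ' D μ A) (hA : 0 ≤ A) (x : ℝ) :
    ∑ i : Fin D, ψ' (x + (i : ℕ)) ≤ Real.exp A := by
  have key : ∀ i : ℕ, ψ' (x + i) ≤ Real.exp A * (ψ (x + (i + 1 : ℕ)) - ψ (x + i)) := by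
    intro i
    obtain ⟨c, hc, hc'⟩ := exists_hasDerivAt_eq_slope ψ ψ' (a := x + i) (b := x + (i + 1 : ℕ))
      (by push_cast; linarith) (fun z _ => (B.der z).continuousAt.continuousWithinAt)
      (fun z _ => B.der z)
    have h1 : ψ (x + (i + 1 : ℕ)) - ψ (x + i) = ψ' c := by
      rw [hc']; push_cast; rw [show x + ((i:ℝ) + 1) - (x + i) = 1 by ring, div_one]
    rw [h1]
    apply B.le_exp hA
    obtain ⟨h2, h3⟩ := hc
    push_cast at h3
    rw [abs_le]; constructor <;> linarith
  rw [Fin.sum_univ_eq_sum_range (fun i : ℕ => ψ' (x + (i : ℕ)))]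
  calc _ ≤ ∑ i ∈ Finset.range D, Real.exp A * (ψ (x + (i + 1 : ℕ)) - ψ (x + i)) :=
        Finset.sum_le_sum fun i _ => key i
    _ = Real.exp A := by
      rw [← Finset.mul_sum, Finset.sum_range_sub (fun i : ℕ => ψ (x + (i : ℕ)))]
      rw [B.per]; simp

theorem abs_sub_le {ψ ψ' : ℝ → ℝ} {D : ℕ} {μ A : ℝ} (B : InvB ψ ψ' D μ A) (hA : 0 ≤ A) {x y : ℝ}
    (h : |x - y| ≤ 1) : |ψ' x - ψ' y| ≤ Real.exp A * A * |x - y| * ψ' x := by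
  have aux : ∀ p q : ℝ, 0 < p → 0 < q → q - p ≤ q * |Real.log q - Real.log p| := by
    intro p q hp hq
    have h1 := Real.log_le_sub_one_of_pos (div_pos hp hq)
    rw [Real.log_div hp.ne' hq.ne'] at h1
    have h2 : 1 - p / q ≤ |Real.log q - Real.log p| := by
      have := le_abs_self (Real.log q - Real.log p); linarith
    have h3 := mul_le_mul_of_nonneg_left h2 hq.le
    rwa [mul_sub, mul_one, mul_div_cancel₀ _ hq.ne'] at h3
  have hyx : |y - x| ≤ 1 := by rwa [abs_sub_comm]
  have e1 := B.le_exp hA hyx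
  have px := B.pos x
  have py := B.pos y
  have hL := B.logLip x y
  have hL' := B.logLip y x
  rw [abs_sub_comm y x] at hL'
  have a1 := aux _ _ px py
  have a2 := aux _ _ py px
  have hE : 1 ≤ Real.exp A := Real.one_le_exp hA
  have n1 : 0 ≤ A * |x - y| := by positivity
  rw [abs_le]
  constructor
  · have : ψ' y * |Real.log (ψ' y) - Real.log (ψ' x)| ≤ (Real.exp A * ψ' x) * (A * |x - y|) :=
      mul_le_mul e1 hL' (abs_nonneg _) (by positivity)
    linarith
  · have : ψ' x * |Real.log (ψ' x) - Real.log (ψ' y)| ≤ (Real.exp A * ψ' x) * (A * |x - y|) :=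
      mul_le_mul (by nlinarith) hL (abs_nonneg _) (by positivity)
    linarith

end InvB

namespace CM

theorem F_add_int {lam Astar : ℝ} (T : CM lam Astar) (x : ℝ) (n : ℤ) :
    T.F (x + n) = T.F x + (T.deg * n : ℤ) := by
  induction n with
  | zero => simp
  | succ n ih =>
    have := T.lift_add_one (x + n)
    push_cast at *
    rw [← add_assoc, this, ih]; ring
  | pred n ih =>
    have := T.lift_add_one (x + (-(n:ℝ) - 1))
    push_cast at *
    rw [show x + (-(n:ℝ) - 1) + 1 = x + -n by ring, ih] at this
    linarith

theorem dF_add_int {lam Astar : ℝ} (T : CM lam Astar) (x : ℝ) (n : ℤ) :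
    deriv T.F (x + n) = deriv T.F x := by
  rw [← deriv_comp_add_const]
  simp only [T.F_add_int]
  simp

theorem exists_int (u : ℝ) : ∃ n : ℤ, ((AddCircle.equivIco 1 0 (u : Circle1) : ℝ)) = u + n := by
  refine ⟨-⌊u⌋, ?_⟩
  have := AddCircle.coe_equivIco_mk_apply (1:ℝ) u
  simp only [div_one, mul_one] at this
  push_cast
  exact this

theorem coe_add_int (u : ℝ) (n : ℤ) : ((u + n : ℝ) : Circle1) = u := by
  have : ((n : ℝ) : Circle1) = 0 := (AddCircle.coe_eq_zero_iff (1:ℝ)).2 ⟨n, by simp⟩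
  rw [AddCircle.coe_add, this, add_zero]

theorem coe_eq {u v : ℝ} (h : (u : Circle1) = v) : ∃ n : ℤ, u = v + n := by
  have : ((u - v : ℝ) : Circle1) = 0 := by rw [AddCircle.coe_sub, h, sub_self]
  obtain ⟨n, hn⟩ := (AddCircle.coe_eq_zero_iff (1:ℝ)).1 this
  exact ⟨n, by simp at hn; linarith⟩

theorem toMap_coe {lam Astar : ℝ} (T : CM lam Astar) (u : ℝ) :
    T.toMap (u : Circle1) = (T.F u : Circle1) := by
  obtain ⟨n, hn⟩ := exists_int u
  unfold toMap
  rw [hn, F_add_int, coe_add_int]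

theorem dmap_coe {lam Astar : ℝ} (T : CM lam Astar) (u : ℝ) :
    T.dmap (u : Circle1) = deriv T.F u := by
  obtain ⟨n, hn⟩ := exists_int u
  unfold dmap
  rw [hn, dF_add_int]

/-- One-step description of the transfer operator through an inverse of the lift. -/
theorem one_step {lam Astar : ℝ} (T : CM lam Astar) (hlam : 1 < lam) :
    ∃ (ψ ψ' : ℝ → ℝ) (d : ℕ), InvB ψ ψ' d lam⁻¹ (Astar / lam ^ 2) ∧
      ∀ (h : Circle1 → ℝ) (x : ℝ), transfer T h (x : Circle1) =
        ∑ i : Fin d, h ((ψ (x + (i : ℕ)) : ℝ) : Circle1) * ψ' (x + (i : ℕ)) := by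
  have hl0 : 0 < lam := by linarith
  have hpos : ∀ x, 0 < deriv T.F x := fun x => hl0.trans_le (T.expanding x)
  have hdiff : Differentiable ℝ T.F := T.contDiff.differentiable (by norm_num)
  have hmono : StrictMono T.F := strictMono_of_deriv_pos hpos
  have hd : 0 < T.deg := by
    have h1 := T.lift_add_one 0
    have h2 : T.F 0 < T.F (0 + 1) := hmono (by norm_num)
    have : (0:ℝ) < T.deg := by linarith
    exact_mod_cast this
  obtain ⟨d, hdd⟩ := Int.eq_ofNat_of_zero_le hd.le
  have hd0 : 0 < d := by omega
  have hd1 : (1:ℝ) ≤ d := by exact_mod_cast hd0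
  have hsurj : Function.Surjective T.F := by
    intro y
    obtain ⟨n, hn⟩ := exists_nat_ge (|y - T.F 0|)
    have h1 := T.F_add_int 0 n
    have h2 := T.F_add_int 0 (-n)
    rw [hdd] at h1 h2
    push_cast at h1 h2
    have hn0 : (0:ℝ) ≤ n := by positivity
    have hdn : (n:ℝ) ≤ d * n := by nlinarith
    have := abs_le.1 hn
    have hy : y ∈ Set.Icc (T.F (0 + -(n:ℝ))) (T.F (0 + n)) := by
      rw [h1, h2]; constructor <;> linarith [this.1, this.2]
    obtain ⟨c, -, hc⟩ := intermediate_value_Icc (by linarith) hdiff.continuous.continuousOn hy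
    exact ⟨c, hc⟩
  let e := hmono.orderIsoOfSurjective T.F hsurj
  let ψ : ℝ → ℝ := fun x => e.symm x
  have hFψ : ∀ x, T.F (ψ x) = x := fun x => e.apply_symm_apply x
  have hψF : ∀ x, ψ (T.F x) = x := fun x => e.symm_apply_apply x
  have hcont : Continuous ψ := e.symm.continuous
  have hder : ∀ x, HasDerivAt ψ (deriv T.F (ψ x))⁻¹ x := fun x =>
    HasDerivAt.of_local_left_inverse hcont.continuousAt (hdiff _).hasDerivAt (hpos _).ne'
      (Filter.Eventually.of_forall hFψ)
  have hper : ∀ x, ψ (x + d) = ψ x + 1 := by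
    intro x
    apply hmono.injective
    rw [hFψ, T.lift_add_one, hFψ, hdd]; simp
  have hd2 : Differentiable ℝ (deriv T.F) := by
    have : ContDiff ℝ 1 (deriv T.F) := by
      have h2 : ContDiff ℝ (1 + 1) T.F := by
        have := T.contDiff
        norm_num
        exact this
      exact ((contDiff_succ_iff_deriv).1 h2).2.2
    exact this.differentiable (by norm_num)
  have B : InvB ψ (fun x => (deriv T.F (ψ x))⁻¹) d lam⁻¹ (Astar / lam ^ 2) := by
    refine ⟨hder, fun x => inv_pos.2 (hpos _), fun x => inv_anti₀ hl0 (T.expanding _), hper, ?_⟩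
    intro x y
    simp only [Real.log_inv]
    have hg : ∀ z, HasDerivAt (fun x => -Real.log (deriv T.F (ψ x)))
        (-(deriv (deriv T.F) (ψ z) * (deriv T.F (ψ z))⁻¹ / deriv T.F (ψ z))) z := by
      intro z
      have := (((hd2 (ψ z)).hasDerivAt.comp z (hder z)).log (hpos _).ne').neg
      exact this
    have hb : ∀ z, ‖(-(deriv (deriv T.F) (ψ z) * (deriv T.F (ψ z))⁻¹ / deriv T.F (ψ z)))‖ ≤
        Astar / lam ^ 2 := by
      intro z
      rw [norm_neg, Real.norm_eq_abs, ← div_eq_mul_inv, div_div, abs_div,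
        abs_of_pos (mul_pos (hpos _) (hpos _))]
      have h1 := T.second_bound (ψ z)
      have h2 := T.expanding (ψ z)
      exact div_le_div₀ ((abs_nonneg _).trans h1) h1 (by positivity) (by nlinarith)
    have := Convex.norm_image_sub_le_of_norm_hasDerivWithin_le (s := Set.univ)
      (x := y) (y := x) (fun z _ => (hg z).hasDerivWithinAt)
      (fun z _ => hb z) convex_univ (Set.mem_univ _) (Set.mem_univ _)
    simpa only [Real.norm_eq_abs] using this
  refine ⟨ψ, _, d, B, ?_⟩
  intro h x
  let f : Fin d → {y : Circle1 // T.toMap y = (x : Circle1)} := fun i =>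
    ⟨((ψ (x + (i : ℕ)) : ℝ) : Circle1), by
      rw [toMap_coe, hFψ]; exact_mod_cast coe_add_int x (i : ℕ)⟩
  have hf : Function.Bijective f := by
    constructor
    · intro i j hij
      have h1 : ((ψ (x + (i : ℕ)) : ℝ) : Circle1) = ((ψ (x + (j : ℕ)) : ℝ) : Circle1) :=
        congrArg Subtype.val hij
      obtain ⟨n, hn⟩ := coe_eq h1
      rw [← B.per_int] at hn
      have h2 := e.symm.injective hn
      have h3 : ((i : ℕ) : ℤ) = (j : ℕ) + d * n := by
        have : ((i : ℕ) : ℝ) = (j : ℕ) + d * n := by linarith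
        exact_mod_cast this
      have hi := i.2
      have hj := j.2
      have h4 : ((i : ℕ) : ℤ) % d = ((j : ℕ) : ℤ) % d := by rw [h3]; simp
      rw [Int.emod_eq_of_lt (by omega) (by omega), Int.emod_eq_of_lt (by omega) (by omega)] at h4
      exact Fin.ext (by omega)
    · rintro ⟨y, hy⟩
      obtain ⟨u, rfl⟩ : ∃ u : ℝ, (u : Circle1) = y := QuotientAddGroup.mk_surjective y
      have hy' := hy
      rw [toMap_coe] at hy'
      obtain ⟨m, hm⟩ := coe_eq hy'
      have hm0 : 0 ≤ m % d := Int.emod_nonneg _ (by omega)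
      have hm1 : m % d < d := Int.emod_lt_of_pos _ (by omega)
      refine ⟨⟨(m % d).toNat, by omega⟩, Subtype.ext ?_⟩
      show ((ψ (x + ((m % d).toNat : ℕ)) : ℝ) : Circle1) = u
      have h5 : (((m % d).toNat : ℕ) : ℝ) = ((m % d : ℤ) : ℝ) := by
        have : (((m % d).toNat : ℕ) : ℤ) = m % d := Int.toNat_of_nonneg hm0
        exact_mod_cast this
      have h6 : (m : ℝ) = ((m % d : ℤ) : ℝ) + d * ((m / d : ℤ) : ℝ) := by
        have := (Int.emod_add_mul_ediv m d).symm
        exact_mod_cast this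
      have h7 : u = ψ (x + ((m % d).toNat : ℕ)) + ((m / d : ℤ) : ℝ) := by
        rw [← B.per_int, h5, add_assoc, ← h6, ← hm, hψF]
      rw [h7, coe_add_int]
  unfold transfer
  rw [← (Equiv.ofBijective f hf).tsum_eq, tsum_fintype]
  refine Finset.sum_congr rfl fun i _ => ?_
  show h ((ψ (x + (i : ℕ)) : ℝ) : Circle1) / T.dmap ((ψ (x + (i : ℕ)) : ℝ) : Circle1) = _
  rw [dmap_coe, div_eq_mul_inv]

end CM

theorem iter_rep {lam Astar : ℝ} (hlam : 1 < lam) (hA : 0 < Astar) (Ts : ℕ → CM lam Astar)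
    (k : ℕ) :
    ∃ (ψ ψ' : ℝ → ℝ) (D : ℕ), InvB ψ ψ' D (lam⁻¹ ^ k) (Astar / (lam ^ 2 - lam)) ∧
      ∀ (h : Circle1 → ℝ) (x : ℝ), transferIter Ts k h (x : Circle1) =
        ∑ i : Fin D, h ((ψ (x + (i : ℕ)) : ℝ) : Circle1) * ψ' (x + (i : ℕ)) := by
  have hl0 : 0 < lam := by linarith
  have hll : 0 < lam ^ 2 - lam := by nlinarith
  have hA' : 0 ≤ Astar / (lam ^ 2 - lam) := by positivity
  induction k with
  | zero =>
    refine ⟨fun x => x, fun _ => 1, 1, ⟨fun x => hasDerivAt_id x, by simp, by simp, by simp, ?_⟩, ?_⟩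
    · intro x y; simp; positivity
    · intro h x; simp [transferIter]
  | succ k ih =>
    obtain ⟨ψ, ψ', D, B, hB⟩ := ih
    obtain ⟨φ, φ', d, E, hE⟩ := (Ts (k + 1)).one_step hlam
    refine ⟨_, _, _, (B.comp hA' E).mono (pow_succ _ _).ge (le_of_eq ?_), ?_⟩
    · have : lam - 1 ≠ 0 := by linarith
      rw [show lam ^ 2 - lam = lam * (lam - 1) by ring]
      field_simp
      ring
    · intro h x
      show transfer (Ts (k + 1)) (transferIter Ts k h) x = _
      rw [hE, ← finProdFinEquiv.sum_comp, Fintype.sum_prod_type_right]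
      refine Finset.sum_congr rfl fun j _ => ?_
      rw [hB, Finset.sum_mul]
      refine Finset.sum_congr rfl fun i _ => ?_
      have h1 : x + ((finProdFinEquiv (i, j) : Fin (D * d)) : ℕ)
          = x + (j : ℕ) + d * (i : ℕ) := by
        simp [finProdFinEquiv]; ring
      have h2 := E.per_mul (x + (j : ℕ)) i
      have h3 : φ' (x + (j : ℕ) + d * (i : ℕ)) = φ' (x + (j : ℕ)) := by
        have e1 := (E.der (x + (j : ℕ) + d * (i : ℕ))).comp_add_const (x + (j : ℕ)) (d * (i : ℕ))
        have e2 := (E.der (x + (j : ℕ))).add_const ((i : ℕ) : ℝ)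
        have e3 : (fun y => φ (y + d * (i : ℕ))) = fun y => φ y + (i : ℕ) :=
          funext fun y => E.per_mul y i
        rw [e3] at e1
        exact e1.unique e2
      rw [h1, h2, h3, mul_assoc]

theorem abs_le_supNorm {h : Circle1 → ℝ} {K : NNReal} (hK : LipschitzWith K h) (x : Circle1) :
    |h x| ≤ supNorm h := by
  have : BddAbove (Set.range fun x => |h x|) :=
    (isCompact_range (continuous_abs.comp hK.continuous)).bddAbove
  exact le_ciSup this x

theorem lipConst_nonneg (h : Circle1 → ℝ) : 0 ≤ lipConst h :=
  Real.sInf_nonneg fun _ hL => hL.1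

theorem lipConst_spec {h : Circle1 → ℝ} {K : NNReal} (hK : LipschitzWith K h) (x y : Circle1) :
    |h x - h y| ≤ lipConst h * dist x y := by
  rcases (dist_nonneg (x := x) (y := y)).eq_or_lt with h0 | h0
  · have : x = y := dist_eq_zero.1 h0.symm
    simp [this]
  · rw [← div_le_iff₀ h0]
    apply le_csInf
    · exact ⟨K, K.2, fun x y => by simpa [Real.dist_eq] using hK.dist_le_mul x y⟩
    · intro L hL
      rw [div_le_iff₀ h0]; exact hL.2 x y

theorem exists_reps (x y : Circle1) :
    ∃ u v : ℝ, (u : Circle1) = x ∧ (v : Circle1) = y ∧ |u - v| = dist x y ∧ |u - v| ≤ 1 := by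
  obtain ⟨a, rfl⟩ : ∃ u : ℝ, (u : Circle1) = x := QuotientAddGroup.mk_surjective x
  obtain ⟨b, rfl⟩ : ∃ u : ℝ, (u : Circle1) = y := QuotientAddGroup.mk_surjective y
  refine ⟨a, b + round (a - b), rfl, CM.coe_add_int _ _, ?_, ?_⟩
  · rw [dist_eq_norm, ← AddCircle.coe_sub, AddCircle.norm_eq]
    simp [sub_sub]
  · have := abs_sub_round (a - b)
    rw [← sub_sub]; linarith

theorem dist_coe_le (u v : ℝ) : dist (u : Circle1) (v : Circle1) ≤ |u - v| := by
  rw [dist_eq_norm, ← AddCircle.coe_sub, AddCircle.norm_eq]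
  simpa using round_le (u - v) 0

/-- Lemma `lem:LY`.  Uniform bounds for products of transfer operators:
`‖ℒ_k⋯ℒ_1 1‖_∞ ≤ C`, `‖ℒ_k⋯ℒ_1 h‖_∞ ≤ C‖h‖_∞`, `‖ℒ_k⋯ℒ_1 h‖_Lip ≤ C‖h‖_Lip`, and the
Lasota–Yorke inequality `‖ℒ_k⋯ℒ_1 h‖_Lip ≤ Cλ^{−k}‖h‖_Lip + C‖h‖_∞`, for every `k ≥ 1`,
every sequence `(T_i) ⊆ 𝓜` and every Lipschitz `h`. -/
theorem statement2 {lam Astar : ℝ} (hlam : 1 < lam) (hA : 0 < Astar) :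
    ∃ C : ℝ, 0 < C ∧
      ∀ (Ts : ℕ → CM lam Astar) (k : ℕ), 1 ≤ k →
        supNorm (transferIter Ts k (fun _ => (1 : ℝ))) ≤ C ∧
        ∀ h : Circle1 → ℝ, (∃ K : NNReal, LipschitzWith K h) →
          supNorm (transferIter Ts k h) ≤ C * supNorm h ∧
          lipNorm (transferIter Ts k h) ≤ C * lipNorm h ∧
          lipNorm (transferIter Ts k h) ≤ C * lam ^ (-(k : ℤ)) * lipNorm h + C * supNorm h := by
  have hl0 : 0 < lam := by linarith
  have hll : 0 < lam ^ 2 - lam := by nlinarith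
  obtain ⟨A, hAd⟩ : ∃ A, A = Astar / (lam ^ 2 - lam) := ⟨_, rfl⟩
  have hA0 : 0 ≤ A := by rw [hAd]; positivity
  have hexp : 0 < Real.exp A := Real.exp_pos A
  obtain ⟨C, hC⟩ : ∃ C, C = Real.exp A + Real.exp A * A * Real.exp A := ⟨_, rfl⟩
  have hCe : Real.exp A ≤ C := by
    have : 0 ≤ Real.exp A * A * Real.exp A := by positivity
    linarith
  have hC0 : 0 < C := hexp.trans_le hCe
  refine ⟨C, hC0, ?_⟩
  intro Ts k _
  obtain ⟨ψ, ψ', D, B, hB⟩ := iter_rep hlam hA Ts k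
  rw [← hAd] at B
  have hμ0 : 0 ≤ lam⁻¹ ^ k := by positivity
  have hμ1 : lam⁻¹ ^ k ≤ 1 := pow_le_one₀ (by positivity) (inv_le_one_of_one_le₀ hlam.le)
  have hμz : lam ^ (-(k : ℤ)) = lam⁻¹ ^ k := by simp
  have ptw : ∀ (h : Circle1 → ℝ) (s : ℝ), (∀ x, |h x| ≤ s) → 0 ≤ s →
      supNorm (transferIter Ts k h) ≤ Real.exp A * s := by
    intro h s hs hs0
    apply ciSup_le
    intro x
    obtain ⟨u, rfl⟩ : ∃ u : ℝ, (u : Circle1) = x := QuotientAddGroup.mk_surjective x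
    rw [hB]
    calc _ ≤ ∑ i : Fin D, |h ((ψ (u + (i : ℕ)) : ℝ) : Circle1) * ψ' (u + (i : ℕ))| :=
          Finset.abs_sum_le_sum_abs _ _
      _ ≤ ∑ i : Fin D, s * ψ' (u + (i : ℕ)) := by
          refine Finset.sum_le_sum fun i _ => ?_
          rw [abs_mul, abs_of_pos (B.pos _)]
          exact mul_le_mul_of_nonneg_right (hs _) (B.pos _).le
      _ = s * ∑ i : Fin D, ψ' (u + (i : ℕ)) := (Finset.mul_sum _ _ _).symm
      _ ≤ s * Real.exp A := mul_le_mul_of_nonneg_left (B.sum_le hA0 u) hs0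
      _ = _ := mul_comm _ _
  constructor
  · have := ptw (fun _ => 1) 1 (by simp) zero_le_one
    linarith
  rintro h ⟨K, hK⟩
  have hs := abs_le_supNorm hK
  have hs0 : 0 ≤ supNorm h := (abs_nonneg _).trans (hs 0)
  have hL0 := lipConst_nonneg h
  have hsup := ptw h _ hs hs0
  have hlip : lipConst (transferIter Ts k h) ≤
      Real.exp A * (lipConst h * lam⁻¹ ^ k + supNorm h * (Real.exp A * A)) := by
    apply csInf_le ⟨0, fun _ hL => hL.1⟩
    refine ⟨by positivity, ?_⟩
    intro x y
    obtain ⟨u, v, rfl, rfl, hd, hd1⟩ := exists_reps x y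
    rw [hB, hB, ← Finset.sum_sub_distrib, ← hd]
    calc _ ≤ ∑ i : Fin D, |h ((ψ (u + (i : ℕ)) : ℝ) : Circle1) * ψ' (u + (i : ℕ)) -
              h ((ψ (v + (i : ℕ)) : ℝ) : Circle1) * ψ' (v + (i : ℕ))| :=
          Finset.abs_sum_le_sum_abs _ _
      _ ≤ ∑ i : Fin D, (lipConst h * lam⁻¹ ^ k + supNorm h * (Real.exp A * A)) * |u - v| *
            ψ' (u + (i : ℕ)) := by
          refine Finset.sum_le_sum fun i _ => ?_
          have huv : (u + (i : ℕ)) - (v + (i : ℕ)) = u - v := by ring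
          have p := B.pos (u + (i : ℕ))
          have h1 : |ψ' (u + (i : ℕ)) - ψ' (v + (i : ℕ))| ≤ _ :=
            B.abs_sub_le hA0 (by rw [huv]; exact hd1)
          have h2 := B.lip (u + (i : ℕ)) (v + (i : ℕ))
          rw [huv] at h1 h2
          have h3 := (lipConst_spec hK ((ψ (u + (i : ℕ)) : ℝ) : Circle1)
            ((ψ (v + (i : ℕ)) : ℝ) : Circle1)).trans
            (mul_le_mul_of_nonneg_left ((dist_coe_le _ _).trans h2) hL0)
          have h4 := hs ((ψ (v + (i : ℕ)) : ℝ) : Circle1)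
          have h5 := mul_le_mul h4 h1 (abs_nonneg _) hs0
          have h6 := mul_le_mul_of_nonneg_right h3 p.le
          calc _ = |(h ((ψ (u + (i : ℕ)) : ℝ) : Circle1) - h ((ψ (v + (i : ℕ)) : ℝ) : Circle1))
                  * ψ' (u + (i : ℕ)) + h ((ψ (v + (i : ℕ)) : ℝ) : Circle1) *
                  (ψ' (u + (i : ℕ)) - ψ' (v + (i : ℕ)))| := by congr 1; ring
            _ ≤ _ := abs_add_le _ _
            _ ≤ _ := by
              rw [abs_mul, abs_mul, abs_of_pos p]
              linarith
      _ = (lipConst h * lam⁻¹ ^ k + supNorm h * (Real.exp A * A)) * |u - v| *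
            ∑ i : Fin D, ψ' (u + (i : ℕ)) := (Finset.mul_sum _ _ _).symm
      _ ≤ (lipConst h * lam⁻¹ ^ k + supNorm h * (Real.exp A * A)) * |u - v| * Real.exp A :=
          mul_le_mul_of_nonneg_left (B.sum_le hA0 u) (by positivity)
      _ = _ := by ring
  have h4 : lipNorm (transferIter Ts k h) ≤
      C * lam ^ (-(k : ℤ)) * lipNorm h + C * supNorm h := by
    rw [hμz]
    unfold lipNorm
    have e1 : Real.exp A * (lipConst h * lam⁻¹ ^ k) ≤ C * (lipConst h * lam⁻¹ ^ k) :=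
      mul_le_mul_of_nonneg_right hCe (by positivity)
    have e2 : 0 ≤ C * lam⁻¹ ^ k * supNorm h := by positivity
    have e3 : C * supNorm h = Real.exp A * supNorm h +
        Real.exp A * (supNorm h * (Real.exp A * A)) := by rw [hC]; ring
    linarith
  refine ⟨hsup.trans (mul_le_mul_of_nonneg_right hCe hs0), ?_, h4⟩
  unfold lipNorm
  have e1 : Real.exp A * (lipConst h * lam⁻¹ ^ k) ≤ C * (lipConst h * 1) :=
    mul_le_mul hCe (mul_le_mul_of_nonneg_left hμ1 hL0) (by positivity) hC0.le
  have e3 : C * supNorm h = Real.exp A * supNorm h +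
      Real.exp A * (supNorm h * (Real.exp A * A)) := by rw [hC]; ring
  linarith
end

section
/- There exists a constant C > 0, depending only on λ and A*, such that: (1) for all T₁, T₂ ∈ 𝓜 with transfer operators ℒ₁, ℒ₂ and every Lipschitz continuous h : 𝕊 → ℝ, ‖(ℒ₁ − ℒ₂)h‖_∞ ≤ C ‖h‖_Lip · d_{C¹}(T₁, T₂); and (2) for all k ≥ 1 and all T_i, T̃_i ∈ 𝓜 (1 ≤ i ≤ k) with transfer operators ℒ_i, ℒ̃_i, and every Lipschitz continuous h, ‖(ℒ_k ⋯ ℒ_1 − ℒ̃_k ⋯ ℒ̃_1)h‖_∞ ≤ C ‖h‖_Lip · Σ_{j=1}^k d_{C¹}(T_j, T̃_j). -/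
open MeasureTheory Filter Topology Set UniformConvergence

namespace TP

variable {lam Astar : ℝ}

/-- The inverse of the lift. -/
noncomputable def G (T : CM lam Astar) : ℝ → ℝ := Function.invFun T.F

lemma diffF (T : CM lam Astar) : Differentiable ℝ T.F :=
  T.contDiff.differentiable (by norm_num)

lemma contD (T : CM lam Astar) : Continuous (deriv T.F) :=
  T.contDiff.continuous_deriv (by norm_num)

lemma diffD (T : CM lam Astar) : Differentiable ℝ (deriv T.F) := by
  have h : ContDiff ℝ (1 + 1) T.F := by simpa [one_add_one_eq_two] using T.contDiff
  exact ((contDiff_succ_iff_deriv.1 h).2.2).differentiable (by norm_num)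

lemma lipD (T : CM lam Astar) (s t : ℝ) :
    |deriv T.F s - deriv T.F t| ≤ Astar * |s - t| := by
  have := Convex.norm_image_sub_le_of_norm_deriv_le (f := deriv T.F) (s := univ) (C := Astar)
    (x := t) (y := s) (fun x _ => (diffD T) x) (fun x _ => T.second_bound x) convex_univ
    trivial trivial
  simpa using this

lemma expand (T : CM lam Astar) {s t : ℝ} (h : s ≤ t) : lam * (t - s) ≤ T.F t - T.F s :=
  mul_sub_le_image_sub_of_le_deriv (diffF T) T.expanding h

lemma expand_abs (_hlam : 1 < lam) (T : CM lam Astar) (s t : ℝ) :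
    lam * |s - t| ≤ |T.F s - T.F t| := by
  rcases le_total s t with h | h
  · have := expand T h
    rw [abs_sub_comm s t, abs_sub_comm (T.F s), abs_of_nonneg (by linarith : 0 ≤ t - s)]
    exact this.trans (le_abs_self _)
  · have := expand T h
    rw [abs_of_nonneg (by linarith : 0 ≤ s - t)]
    exact this.trans (le_abs_self _)

lemma injF (hlam : 1 < lam) (T : CM lam Astar) : Function.Injective T.F := by
  intro s t h
  have := expand_abs hlam T s t
  rw [h, sub_self, abs_zero] at this
  have h2 : |s - t| = 0 := by nlinarith [abs_nonneg (s - t)]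
  linarith [abs_eq_zero.1 h2]

lemma surjF (hlam : 1 < lam) (T : CM lam Astar) : Function.Surjective T.F := by
  intro t
  refine mem_range_of_exists_le_of_exists_ge (diffF T).continuous
    ⟨-|t - T.F 0|, ?_⟩ ⟨|t - T.F 0|, ?_⟩
  · have := expand T (neg_nonpos.2 (abs_nonneg (t - T.F 0)))
    nlinarith [neg_abs_le (t - T.F 0), abs_nonneg (t - T.F 0)]
  · have := expand T ((abs_nonneg (t - T.F 0)))
    nlinarith [le_abs_self (t - T.F 0), abs_nonneg (t - T.F 0)]

lemma FG (hlam : 1 < lam) (T : CM lam Astar) (t : ℝ) : T.F (G T t) = t :=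
  Function.rightInverse_invFun (surjF hlam T) t

lemma GF (hlam : 1 < lam) (T : CM lam Astar) (t : ℝ) : G T (T.F t) = t :=
  Function.leftInverse_invFun (injF hlam T) t

lemma lipG (hlam : 1 < lam) (T : CM lam Astar) (s t : ℝ) :
    lam * |G T s - G T t| ≤ |s - t| := by
  have := expand_abs hlam T (G T s) (G T t)
  rwa [FG hlam, FG hlam] at this

lemma contG (hlam : 1 < lam) (T : CM lam Astar) : Continuous (G T) := by
  have : LipschitzWith 1 (G T) := by
    refine LipschitzWith.of_dist_le_mul fun s t => ?_
    have := lipG hlam T s t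
    simp only [Real.dist_eq, NNReal.coe_one, one_mul]
    nlinarith [abs_nonneg (G T s - G T t)]
  exact this.continuous

lemma dpos (hlam : 1 < lam) (T : CM lam Astar) (t : ℝ) : 0 < deriv T.F t := by
  linarith [T.expanding t]

lemma derivG (hlam : 1 < lam) (T : CM lam Astar) (t : ℝ) :
    HasDerivAt (G T) (deriv T.F (G T t))⁻¹ t :=
  HasDerivAt.of_local_left_inverse (contG hlam T).continuousAt ((diffF T) _).hasDerivAt
    (dpos hlam T _).ne' (Eventually.of_forall (FG hlam T))

lemma F_add_nat (T : CM lam Astar) (n : ℕ) (t : ℝ) : T.F (t + n) = T.F t + n * T.deg := by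
  induction n with
  | zero => simp
  | succ n ih =>
    push_cast
    rw [← add_assoc, T.lift_add_one, ih]; ring

lemma F_add_int (T : CM lam Astar) (n : ℤ) (t : ℝ) : T.F (t + n) = T.F t + n * T.deg := by
  obtain ⟨m, rfl | rfl⟩ := n.eq_nat_or_neg
  · simpa using F_add_nat T m t
  · have := F_add_nat T m (t + (-(m:ℝ)))
    push_cast
    rw [neg_add_cancel_right] at this
    linarith

lemma D_add_int (T : CM lam Astar) (n : ℤ) (t : ℝ) : deriv T.F (t + n) = deriv T.F t := by
  have h : (fun t => T.F (t + n)) = fun t => T.F t + n * T.deg := funext fun t => F_add_int T n t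
  have h2 := congrFun (congrArg deriv h) t
  rw [deriv_add_const, deriv_comp_add_const] at h2
  exact h2

lemma deg_pos (hlam : 1 < lam) (T : CM lam Astar) : 0 < T.deg := by
  have h1 := T.lift_add_one 0
  have h2 := expand T (zero_le_one (α := ℝ))
  rw [zero_add] at h1
  have : (0:ℝ) < T.deg := by linarith
  exact_mod_cast this

lemma coe_eq_iff (s t : ℝ) : (s : Circle1) = t ↔ ∃ n : ℤ, s = t + n := by
  rw [← sub_eq_zero, ← AddCircle.coe_sub, AddCircle.coe_eq_zero_iff]
  simp only [zsmul_eq_mul, mul_one]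
  exact exists_congr fun n => ⟨fun h => by linarith, fun h => by linarith⟩

lemma rep_coe (s : ℝ) : ∃ n : ℤ, ((AddCircle.equivIco (1:ℝ) 0 (s : Circle1) : ℝ)) = s + n := by
  rw [← coe_eq_iff]
  exact AddCircle.coe_equivIco

lemma toMap_coe (T : CM lam Astar) (s : ℝ) : T.toMap (s : Circle1) = (T.F s : Circle1) := by
  obtain ⟨n, hn⟩ := rep_coe s
  unfold CM.toMap
  rw [hn, F_add_int, coe_eq_iff]
  exact ⟨n * T.deg, by push_cast; ring⟩

lemma dmap_coe (T : CM lam Astar) (s : ℝ) : T.dmap (s : Circle1) = deriv T.F s := by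
  obtain ⟨n, hn⟩ := rep_coe s
  unfold CM.dmap
  rw [hn, D_add_int]

lemma coe_surj (x : Circle1) : ∃ s : ℝ, (s : Circle1) = x := by
  obtain ⟨b, _, hb⟩ := AddCircle.eq_coe_Ico x
  exact ⟨b, hb⟩

lemma dist_coe (s t : ℝ) : dist (s : Circle1) t = |(s - t) - round (s - t)| := by
  rw [dist_eq_norm, ← AddCircle.coe_sub, AddCircle.norm_eq]
  simp

lemma dist_coe_le (s t : ℝ) : dist (s : Circle1) t ≤ |s - t| := by
  rw [dist_coe]
  simpa using round_le (s - t) 0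

/-- branch weight -/
noncomputable def br (T : CM lam Astar) (h : Circle1 → ℝ) (t : ℝ) : ℝ :=
  h (G T t : ℝ) / deriv T.F (G T t)

lemma transfer_eq (hlam : 1 < lam) (T : CM lam Astar) (h : Circle1 → ℝ) (t : ℝ) :
    transfer T h t = ∑ j ∈ Finset.range T.deg.toNat, br T h (t + j) := by
  have hd := deg_pos hlam T
  have hd' : ((T.deg.toNat : ℤ)) = T.deg := Int.toNat_of_nonneg hd.le
  let e : Fin T.deg.toNat → {y : Circle1 // T.toMap y = (t : Circle1)} := fun j =>
    ⟨((G T (t + (j : ℕ)) : ℝ) : Circle1), by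
      rw [toMap_coe, FG hlam, coe_eq_iff]; exact ⟨(j : ℕ), by simp⟩⟩
  have he : Function.Bijective e := by
    constructor
    · intro i j hij
      have h1 : ((G T (t + (i : ℕ)) : ℝ) : Circle1) = (G T (t + (j : ℕ)) : ℝ) :=
        congrArg Subtype.val hij
      obtain ⟨n, hn⟩ := (coe_eq_iff _ _).1 h1
      have h2 := congrArg T.F hn
      rw [F_add_int, FG hlam, FG hlam] at h2
      have h3 : ((i : ℕ) : ℤ) = (j : ℕ) + n * T.deg := by
        have : (((i : ℕ) : ℤ) : ℝ) = (((j : ℕ) + n * T.deg : ℤ) : ℝ) := by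
          push_cast; linarith
        exact_mod_cast this
      have hi : ((i : ℕ) : ℤ) < T.deg := by have := i.2; omega
      have hj : ((j : ℕ) : ℤ) < T.deg := by have := j.2; omega
      have h4 : n = 0 := by
        by_contra hne
        rcases lt_or_gt_of_ne hne with h | h
        · nlinarith [Int.natCast_nonneg (i : ℕ)]
        · nlinarith [Int.natCast_nonneg (j : ℕ)]
      subst h4
      apply Fin.ext
      simpa using h3
    · rintro ⟨y, hy⟩
      obtain ⟨s, rfl⟩ := coe_surj y
      rw [toMap_coe] at hy
      obtain ⟨m, hm⟩ := (coe_eq_iff _ _).1 hy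
      have hr0 := Int.emod_nonneg m hd.ne'
      have hr1 := Int.emod_lt_of_pos m hd
      have hr2 := Int.emod_add_mul_ediv m T.deg
      refine ⟨⟨(m % T.deg).toNat, by omega⟩, ?_⟩
      apply Subtype.ext
      show ((G T (t + ((m % T.deg).toNat : ℕ)) : ℝ) : Circle1) = s
      have h5 : (((m % T.deg).toNat : ℕ) : ℝ) = ((m % T.deg : ℤ) : ℝ) := by
        have := Int.toNat_of_nonneg hr0
        exact_mod_cast congrArg (Int.cast : ℤ → ℝ) this
      have h6 : t + (((m % T.deg).toNat : ℕ) : ℝ) = T.F (s + ((-(m / T.deg) : ℤ) : ℝ)) := by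
        rw [h5, F_add_int, hm]
        have : ((m % T.deg + T.deg * (m / T.deg) : ℤ) : ℝ) = m := by rw [hr2]
        push_cast at this ⊢
        linarith
      rw [h6, GF hlam, coe_eq_iff]
      exact ⟨_, rfl⟩
  unfold transfer
  rw [← (Equiv.ofBijective e he).tsum_eq, tsum_fintype, Finset.sum_range]
  refine Finset.sum_congr rfl fun j _ => ?_
  show h ((G T (t + (j : ℕ)) : ℝ) : Circle1) / T.dmap ((G T (t + (j : ℕ)) : ℝ) : Circle1) = _
  rw [dmap_coe]; rfl

lemma transfer_add (hlam : 1 < lam) (T : CM lam Astar) (f g : Circle1 → ℝ) (x : Circle1) :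
    transfer T (fun y => f y + g y) x = transfer T f x + transfer T g x := by
  obtain ⟨t, rfl⟩ := coe_surj x
  simp only [transfer_eq hlam, br, add_div, Finset.sum_add_distrib]

lemma transfer_sub (hlam : 1 < lam) (T : CM lam Astar) (f g : Circle1 → ℝ) (x : Circle1) :
    transfer T (fun y => f y - g y) x = transfer T f x - transfer T g x := by
  obtain ⟨t, rfl⟩ := coe_surj x
  simp only [transfer_eq hlam, br, sub_div, Finset.sum_sub_distrib]

lemma transfer_abs_le (hlam : 1 < lam) (T : CM lam Astar) (f g : Circle1 → ℝ)
    (h : ∀ y, |f y| ≤ g y) (x : Circle1) : |transfer T f x| ≤ transfer T g x := by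
  obtain ⟨t, rfl⟩ := coe_surj x
  simp only [transfer_eq hlam, br]
  refine (Finset.abs_sum_le_sum_abs _ _).trans (Finset.sum_le_sum fun j _ => ?_)
  rw [abs_div, abs_of_pos (dpos hlam T _)]
  exact div_le_div_of_nonneg_right (h _) (dpos hlam T _).le

lemma cont_br (hlam : 1 < lam) (T : CM lam Astar) {f : Circle1 → ℝ} (hf : Continuous f) :
    Continuous (br T f) := by
  unfold br
  refine Continuous.div ?_ ((contD T).comp (contG hlam T)) fun t => (dpos hlam T _).ne'
  exact hf.comp ((AddCircle.continuous_mk' 1).comp (contG hlam T))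

lemma cont_transfer (hlam : 1 < lam) (T : CM lam Astar) {f : Circle1 → ℝ} (hf : Continuous f) :
    Continuous (transfer T f) := by
  have : Continuous (fun t : ℝ => transfer T f (t : Circle1)) := by
    simp only [transfer_eq hlam]
    exact continuous_finsetSum _ fun j _ => (cont_br hlam T hf).comp (by fun_prop)
  exact (QuotientAddGroup.isQuotientMap_mk (N := AddSubgroup.zmultiples (1:ℝ))).continuous_iff.2 this

/-- integral over the circle through the lift -/
noncomputable def I (f : Circle1 → ℝ) : ℝ := ∫ t in (0:ℝ)..1, f (t : Circle1)

lemma cont_lift {f : Circle1 → ℝ} (hf : Continuous f) : Continuous (fun t : ℝ => f (t : Circle1)) :=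
  hf.comp (AddCircle.continuous_mk' 1)

lemma I_add {f g : Circle1 → ℝ} (hf : Continuous f) (hg : Continuous g) :
    I (fun x => f x + g x) = I f + I g :=
  intervalIntegral.integral_add ((cont_lift hf).intervalIntegrable _ _)
    ((cont_lift hg).intervalIntegrable _ _)

lemma I_const (c : ℝ) : I (fun _ => c) = c := by simp [I]

lemma I_shift (f : Circle1 → ℝ) (s : ℝ) : ∫ t in s..(s+1), f (t : Circle1) = I f := by
  have hp : Function.Periodic (fun t : ℝ => f (t : Circle1)) 1 := by
    intro t
    simp only
    rw [AddCircle.coe_add_period]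
  have := hp.intervalIntegral_add_eq s 0
  rw [this, zero_add]; rfl

lemma I_transfer (hlam : 1 < lam) (T : CM lam Astar) {f : Circle1 → ℝ} (hf : Continuous f) :
    I (transfer T f) = I f := by
  have hd := deg_pos hlam T
  have hd' : ((T.deg.toNat : ℕ) : ℝ) = T.deg := by
    exact_mod_cast congrArg (Int.cast : ℤ → ℝ) (Int.toNat_of_nonneg hd.le)
  have hc := cont_br hlam T hf
  unfold I
  simp only [transfer_eq hlam]
  rw [intervalIntegral.integral_finsetSum (f := fun (j : ℕ) (t : ℝ) => br T f (t + j))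
    fun j _ => (hc.comp (by fun_prop : Continuous fun t : ℝ => t + j)).intervalIntegrable _ _]
  have h1 : ∀ j ∈ Finset.range T.deg.toNat, ∫ t in (0:ℝ)..1, br T f (t + j) =
      ∫ t in ((fun n : ℕ => (n : ℝ)) j)..((fun n : ℕ => (n : ℝ)) (j+1)), br T f t := by
    intro j _
    rw [intervalIntegral.integral_comp_add_right]
    congr 1
    · simp
    · push_cast; ring
  rw [Finset.sum_congr rfl h1, intervalIntegral.sum_integral_adjacent_intervals
    fun k _ => hc.intervalIntegrable _ _]
  have h2 := intervalIntegral.integral_comp_mul_deriv (a := ((0:ℕ):ℝ)) (b := (T.deg.toNat : ℝ))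
    (f := G T) (f' := fun t => (deriv T.F (G T t))⁻¹) (g := fun t : ℝ => f (t : Circle1))
    (fun t _ => derivG hlam T t)
    (Continuous.continuousOn
      (((contD T).comp (contG hlam T)).inv₀ fun t => (dpos hlam T _).ne')) (cont_lift hf)
  have h3 : G T (T.deg.toNat : ℝ) = G T ((0:ℕ):ℝ) + 1 := by
    apply injF hlam T
    rw [T.lift_add_one, FG hlam, FG hlam, hd']; simp
  rw [h3, I_shift] at h2
  exact h2

/-- The cone. -/
structure Cone (a : ℝ) (f : Circle1 → ℝ) : Prop where
  cont : Continuous f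
  nonneg : ∀ x, 0 ≤ f x
  le : ∀ s t : ℝ, f (s : Circle1) ≤ Real.exp (a * |s - t|) * f (t : Circle1)

lemma Cone.add {a : ℝ} {f g : Circle1 → ℝ} (hf : Cone a f) (hg : Cone a g) :
    Cone a (fun x => f x + g x) :=
  ⟨hf.cont.add hg.cont, fun x => add_nonneg (hf.nonneg x) (hg.nonneg x), fun s t => by
    rw [mul_add]; exact add_le_add (hf.le s t) (hg.le s t)⟩

lemma Cone.const {a c : ℝ} (ha : 0 ≤ a) (hc : 0 ≤ c) : Cone a (fun _ => c) :=
  ⟨continuous_const, fun _ => hc, fun s t => by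
    have : 1 ≤ Real.exp (a * |s - t|) := Real.one_le_exp (by positivity)
    nlinarith⟩

lemma Cone.transfer (hlam : 1 < lam) (hA : 0 < Astar) {a : ℝ} (ha : 0 ≤ a)
    (hal : a + Astar ≤ lam * a) (T : CM lam Astar) {f : Circle1 → ℝ} (hf : Cone a f) :
    Cone a (transfer T f) := by
  refine ⟨cont_transfer hlam T hf.cont, fun x => ?_, fun s t => ?_⟩
  · obtain ⟨t, rfl⟩ := coe_surj x
    rw [transfer_eq hlam]
    exact Finset.sum_nonneg fun j _ => div_nonneg (hf.nonneg _) (dpos hlam T _).le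
  · rw [transfer_eq hlam, transfer_eq hlam, Finset.mul_sum]
    refine Finset.sum_le_sum fun j _ => ?_
    have h1 := lipG hlam T (s + j) (t + j)
    rw [add_sub_add_right_eq_sub] at h1
    unfold br
    set u := G T (s + j)
    set v := G T (t + j)
    have h2 := hf.le u v
    have h3 := lipD T v u
    have h4 : deriv T.F v ≤ deriv T.F u * Real.exp (Astar * |u - v|) := by
      have e := Real.add_one_le_exp (Astar * |u - v|)
      have p : 0 ≤ Astar * |u - v| := by positivity
      have := (le_abs_self _).trans h3
      rw [abs_sub_comm v u] at this
      have q := T.expanding u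
      nlinarith
    have h5 : Real.exp (a * |u - v|) * Real.exp (Astar * |u - v|) ≤ Real.exp (a * |s - t|) := by
      rw [← Real.exp_add]
      apply Real.exp_le_exp.2
      nlinarith [abs_nonneg (u - v)]
    rw [← mul_div_assoc, div_le_div_iff₀ (dpos hlam T _) (dpos hlam T _)]
    have fv := hf.nonneg (v : Circle1)
    have du := dpos hlam T u
    calc f u * deriv T.F v ≤ (Real.exp (a * |u - v|) * f v) *
          (deriv T.F u * Real.exp (Astar * |u - v|)) :=
          mul_le_mul h2 h4 (dpos hlam T _).le (by positivity)
      _ = (Real.exp (a * |u - v|) * Real.exp (Astar * |u - v|)) * (f v * deriv T.F u) := by ring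
      _ ≤ Real.exp (a * |s - t|) * (f v * deriv T.F u) :=
          mul_le_mul_of_nonneg_right h5 (by positivity)
      _ = _ := by ring

lemma Cone.sup {a : ℝ} (ha : 0 ≤ a) {f : Circle1 → ℝ} (hf : Cone a f) (x : Circle1) :
    f x ≤ Real.exp a * I f := by
  obtain ⟨s, rfl⟩ := coe_surj x
  rw [← I_shift f s, ← intervalIntegral.integral_const_mul]
  have : ∫ t in s..(s+1), f (s : Circle1) = f (s : Circle1) := by simp
  rw [← this]
  refine intervalIntegral.integral_mono_on (by linarith) (by simp)
    ((continuous_const.mul (cont_lift hf.cont)).intervalIntegrable _ _) fun t ht => ?_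
  refine (hf.le s t).trans (mul_le_mul_of_nonneg_right (Real.exp_le_exp.2 ?_) (hf.nonneg _))
  have : |s - t| ≤ 1 := abs_le.2 ⟨by linarith [ht.2], by linarith [ht.1]⟩
  nlinarith

lemma Cone.lip_aux {a : ℝ} (ha : 0 ≤ a) {f : Circle1 → ℝ} (hf : Cone a f) (x y : Circle1) :
    f x - f y ≤ a * Real.exp a * (Real.exp a * I f) * dist x y := by
  obtain ⟨s, rfl⟩ := coe_surj x
  obtain ⟨t', rfl⟩ := coe_surj y
  obtain ⟨t, ht, hd⟩ : ∃ t : ℝ, (t : Circle1) = t' ∧ dist (s : Circle1) t = |s - t| := by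
    refine ⟨t' + round (s - t'), (coe_eq_iff _ _).2 ⟨_, rfl⟩, ?_⟩
    have : ((t' + round (s - t') : ℝ) : Circle1) = t' := (coe_eq_iff _ _).2 ⟨_, rfl⟩
    rw [this, dist_coe, sub_sub]
  rw [← ht, hd]
  have h1 : |s - t| ≤ 1 := by
    rw [← hd, ht, dist_coe]
    exact (abs_sub_round _).trans (by norm_num)
  have h2 := hf.le s t
  have h3 := hf.sup ha t
  have h4 : Real.exp (a * |s - t|) - 1 ≤ a * |s - t| * Real.exp a := by
    have e := Real.add_one_le_exp (-(a * |s - t|))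
    have e2 : Real.exp (-(a * |s - t|)) * Real.exp (a * |s - t|) = 1 := by
      rw [← Real.exp_add]; simp
    have e3 : Real.exp (a * |s - t|) ≤ Real.exp a := Real.exp_le_exp.2 (by nlinarith)
    have p := Real.exp_pos (a * |s - t|)
    have q : 0 ≤ a * |s - t| := by positivity
    nlinarith
  have h5 := hf.nonneg (t : Circle1)
  have q : 0 ≤ a * |s - t| * Real.exp a := by positivity
  calc f s - f t ≤ (Real.exp (a * |s - t|) - 1) * f t := by linarith
    _ ≤ (a * |s - t| * Real.exp a) * f t := mul_le_mul_of_nonneg_right h4 h5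
    _ ≤ (a * |s - t| * Real.exp a) * (Real.exp a * I f) := mul_le_mul_of_nonneg_left h3 q
    _ = _ := by ring

lemma Cone.lip {a : ℝ} (ha : 0 ≤ a) {f : Circle1 → ℝ} (hf : Cone a f) (x y : Circle1) :
    |f x - f y| ≤ a * Real.exp a * (Real.exp a * I f) * dist x y := by
  rw [abs_le]
  have h1 := hf.lip_aux ha x y
  have h2 := hf.lip_aux ha y x
  rw [dist_comm] at h2
  constructor <;> linarith

lemma transfer_abs_const (hlam : 1 < lam) (hA : 0 < Astar) {a : ℝ} (ha : 0 ≤ a)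
    (hal : a + Astar ≤ lam * a) (T : CM lam Astar) {S : ℝ} (hS : 0 ≤ S) (x : Circle1) :
    transfer T (fun _ => S) x ≤ Real.exp a * S := by
  have := ((Cone.const ha hS).transfer hlam hA ha hal T).sup ha x
  rwa [I_transfer hlam T continuous_const, I_const] at this

lemma d_bdd (T : CM lam Astar) : ∃ M : ℝ, ∀ x, |T.dmap x| ≤ M := by
  obtain ⟨M, hM⟩ := (isCompact_Icc (a := (0:ℝ)) (b := 1)).exists_bound_of_continuousOn
    (contD T).continuousOn
  refine ⟨M, fun x => hM _ ?_⟩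
  have := (AddCircle.equivIco (1:ℝ) 0 x).2
  exact ⟨this.1, by linarith [this.2]⟩

lemma dC1_parts (T₁ T₂ : CM lam Astar) : ∃ δ ε : ℝ, 0 ≤ δ ∧ 0 ≤ ε ∧ dC1 T₁ T₂ = δ + ε ∧
    (∀ x, dist (T₁.toMap x) (T₂.toMap x) ≤ δ) ∧ (∀ x, |T₁.dmap x - T₂.dmap x| ≤ ε) := by
  refine ⟨_, _, Real.iSup_nonneg fun x => dist_nonneg, Real.iSup_nonneg fun x => abs_nonneg _,
    rfl, fun x => ?_, fun x => ?_⟩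
  · refine le_ciSup (f := fun x => dist (T₁.toMap x) (T₂.toMap x)) ⟨1/2, ?_⟩ x
    rintro _ ⟨y, rfl⟩
    simp only [dist_eq_norm]
    simpa using AddCircle.norm_le_half_period (p := (1:ℝ)) (x := T₁.toMap y - T₂.toMap y) one_ne_zero
  · obtain ⟨M₁, h₁⟩ := d_bdd T₁
    obtain ⟨M₂, h₂⟩ := d_bdd T₂
    refine le_ciSup (f := fun x => |T₁.dmap x - T₂.dmap x|) ⟨M₁ + M₂, ?_⟩ x
    rintro _ ⟨y, rfl⟩
    exact (abs_sub _ _).trans (add_le_add (h₁ y) (h₂ y))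

lemma dC1_nonneg (T₁ T₂ : CM lam Astar) : 0 ≤ dC1 T₁ T₂ := by
  obtain ⟨δ, ε, h1, h2, h3, _⟩ := dC1_parts T₁ T₂
  rw [h3]; positivity

lemma close_lifts (T₁ T₂ : CM lam Astar) {δ : ℝ} (hδ : δ < 1/4)
    (h : ∀ x, dist (T₁.toMap x) (T₂.toMap x) ≤ δ) :
    ∃ n : ℤ, (∀ s, |T₁.F s - T₂.F s - n| ≤ δ) ∧ T₁.deg = T₂.deg := by
  have h0 : ∀ s : ℝ, |(T₁.F s - T₂.F s) - round (T₁.F s - T₂.F s)| ≤ δ := by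
    intro s
    have := h (s : Circle1)
    rwa [toMap_coe, toMap_coe, dist_coe] at this
  set n := round (T₁.F 0 - T₂.F 0) with hn
  have h1 : ∀ s : ℝ, |T₁.F s - T₂.F s - n| < 1/2 := by
    intro s
    by_contra hs
    push Not at hs
    have hc : Continuous fun s => |T₁.F s - T₂.F s - n| := by
      have := (diffF T₁).continuous
      have := (diffF T₂).continuous
      fun_prop
    obtain ⟨r, hr⟩ := mem_range_of_exists_le_of_exists_ge (c := 1/2) hc
      ⟨0, by have := h0 0; linarith⟩ ⟨s, hs⟩
    simp only at hr
    have hr0 := h0 r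
    set m := round (T₁.F r - T₂.F r)
    have hr1 := abs_le.1 hr0
    rcases abs_eq (by norm_num : (0:ℝ) ≤ 1/2) |>.1 hr with e | e
    · have b1 : ((m - n : ℤ) : ℝ) < 1 := by push_cast; linarith
      have b2 : (0:ℝ) < ((m - n : ℤ) : ℝ) := by push_cast; linarith
      have b1' : m - n < 1 := by exact_mod_cast b1
      have b2' : 0 < m - n := by exact_mod_cast b2
      omega
    · have b1 : ((m - n : ℤ) : ℝ) < 0 := by push_cast; linarith
      have b2 : (-1:ℝ) < ((m - n : ℤ) : ℝ) := by push_cast; linarith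
      have b1' : m - n < 0 := by exact_mod_cast b1
      have b2' : -1 < m - n := by exact_mod_cast b2
      omega
  have h2 : ∀ s, |T₁.F s - T₂.F s - n| ≤ δ := by
    intro s
    have a1 := abs_lt.1 (h1 s)
    have a2 := abs_le.1 (h0 s)
    have a3 := h0 s
    have : round (T₁.F s - T₂.F s) = n := by
      set m := round (T₁.F s - T₂.F s)
      have b1 : ((m - n : ℤ) : ℝ) < 1 := by push_cast; linarith
      have b2 : (-1:ℝ) < ((m - n : ℤ) : ℝ) := by push_cast; linarith
      have b1' : m - n < 1 := by exact_mod_cast b1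
      have b2' : -1 < m - n := by exact_mod_cast b2
      omega
    rwa [this] at a3
  refine ⟨n, h2, ?_⟩
  have a1 := abs_le.1 (h2 0)
  have a2 := abs_le.1 (h2 1)
  have e1 := T₁.lift_add_one 0
  have e2 := T₂.lift_add_one 0
  rw [zero_add] at e1 e2
  have b1 : ((T₁.deg - T₂.deg : ℤ) : ℝ) < 1 := by push_cast; linarith
  have b2 : (-1:ℝ) < ((T₁.deg - T₂.deg : ℤ) : ℝ) := by push_cast; linarith
  have b1' : T₁.deg - T₂.deg < 1 := by exact_mod_cast b1
  have b2' : -1 < T₁.deg - T₂.deg := by exact_mod_cast b2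
  omega

lemma pert (hlam : 1 < lam) (hA : 0 < Astar) {a : ℝ} (ha : 0 ≤ a)
    (hal : a + Astar ≤ lam * a) (T₁ T₂ : CM lam Astar) {g : Circle1 → ℝ} {S L : ℝ}
    (hL0 : 0 ≤ L) (hS : ∀ x, |g x| ≤ S) (hL : ∀ x y, |g x - g y| ≤ L * dist x y) (x : Circle1) :
    |transfer T₁ g x - transfer T₂ g x| ≤
      (Real.exp a * (9 + Astar)) * (L + S) * dC1 T₁ T₂ := by
  obtain ⟨δ, ε, hδ, hε, hd, h1, h2⟩ := dC1_parts T₁ T₂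
  have hS0 : 0 ≤ S := (abs_nonneg _).trans (hS x)
  have hE := Real.exp_pos a
  rw [hd]
  rcases lt_or_ge δ (1/4) with hlt | hge
  · obtain ⟨n, hn, hdeg⟩ := close_lifts T₁ T₂ hlt h1
    obtain ⟨t, rfl⟩ := coe_surj x
    have ht : (t : Circle1) = ((t - n : ℝ) : Circle1) := (coe_eq_iff _ _).2 ⟨n, by ring⟩
    set K := (L + S) * (1 + Astar) * (δ + ε) with hK
    have hK0 : 0 ≤ K := by positivity
    have key : |transfer T₁ g t - transfer T₂ g t| ≤ transfer T₁ (fun _ => K) t := by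
      rw [transfer_eq hlam T₁, transfer_eq hlam T₁]
      rw [ht, transfer_eq hlam T₂, ← hdeg, ← Finset.sum_sub_distrib]
      refine (Finset.abs_sum_le_sum_abs _ _).trans (Finset.sum_le_sum fun j _ => ?_)
      unfold br
      have f1 := FG hlam T₁ (t + j)
      have f2 := FG hlam T₂ (t - n + j)
      set y := G T₁ (t + j)
      set z := G T₂ (t - n + j)
      have e1 : |y - z| ≤ δ := by
        have k1 := expand_abs hlam T₁ z y
        have k2 : T₁.F z - T₁.F y = T₁.F z - T₂.F z - n := by rw [f1, f2]; ring
        rw [k2, abs_sub_comm z y] at k1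
        have := hn z
        nlinarith [abs_nonneg (y - z)]
      have e2 : |g y - g z| ≤ L * δ :=
        (hL _ _).trans (mul_le_mul_of_nonneg_left ((dist_coe_le _ _).trans e1) hL0)
      have e3 : |deriv T₂.F z - deriv T₁.F y| ≤ Astar * δ + ε := by
        have k1 := lipD T₁ z y
        have k2 := h2 (z : Circle1)
        rw [dmap_coe, dmap_coe] at k2
        rw [abs_sub_comm] at k2
        rw [abs_sub_comm z y] at k1
        have k3 := abs_sub_le (deriv T₂.F z) (deriv T₁.F z) (deriv T₁.F y)
        nlinarith
      have p1 := dpos hlam T₁ y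
      have p2 := dpos hlam T₂ z
      have q2 := T₂.expanding z
      have e4 : g y / deriv T₁.F y - g z / deriv T₂.F z =
          ((g y - g z) + g z * ((deriv T₂.F z - deriv T₁.F y) / deriv T₂.F z)) / deriv T₁.F y := by
        field_simp
        ring
      rw [e4, abs_div, abs_of_pos p1]
      refine div_le_div_of_nonneg_right ?_ p1.le
      refine (abs_add_le _ _).trans ?_
      rw [abs_mul, abs_div, abs_of_pos p2]
      have e5 : |deriv T₂.F z - deriv T₁.F y| / deriv T₂.F z ≤ Astar * δ + ε :=
        (div_le_self (abs_nonneg _) (by linarith)).trans e3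
      have e6 : |g z| * (|deriv T₂.F z - deriv T₁.F y| / deriv T₂.F z) ≤ S * (Astar * δ + ε) :=
        mul_le_mul (hS _) e5 (by positivity) hS0
      have e7 : L * δ + S * (Astar * δ + ε) ≤ K := by
        have : 0 ≤ L * Astar * (δ + ε) + L * ε + S * δ + S * Astar * ε := by positivity
        rw [hK]; linarith
      linarith
    have := key.trans (transfer_abs_const hlam hA ha hal T₁ hK0 _)
    refine this.trans ?_
    rw [hK]
    have : 0 ≤ Real.exp a * (L + S) * (δ + ε) := by positivity
    nlinarith
  · have k1 := (transfer_abs_le hlam T₁ g (fun _ => S) hS x).trans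
      (transfer_abs_const hlam hA ha hal T₁ hS0 x)
    have k2 := (transfer_abs_le hlam T₂ g (fun _ => S) hS x).trans
      (transfer_abs_const hlam hA ha hal T₂ hS0 x)
    refine (abs_sub _ _).trans ((add_le_add k1 k2).trans ?_)
    have p : 0 ≤ Real.exp a * (1 + Astar) * (L + S) * (δ + ε) := by positivity
    have q : 0 ≤ Real.exp a * L * (δ + ε) := by positivity
    have r : 0 ≤ Real.exp a * S * ε := by positivity
    have r2 : Real.exp a * S * (1/4) ≤ Real.exp a * S * δ :=
      mul_le_mul_of_nonneg_left hge (by positivity)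
    nlinarith

/-- Differences of cone elements with controlled integral. -/
def Good (a M : ℝ) (g : Circle1 → ℝ) : Prop :=
  ∃ f₁ f₂ : Circle1 → ℝ, Cone a f₁ ∧ Cone a f₂ ∧ I f₁ ≤ M ∧ I f₂ ≤ M ∧ g = fun x => f₁ x - f₂ x

lemma Good.transfer (hlam : 1 < lam) (hA : 0 < Astar) {a M : ℝ} (ha : 0 ≤ a)
    (hal : a + Astar ≤ lam * a) (T : CM lam Astar) {g : Circle1 → ℝ} (hg : Good a M g) :
    Good a M (transfer T g) := by
  obtain ⟨f₁, f₂, h1, h2, i1, i2, rfl⟩ := hg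
  refine ⟨_, _, h1.transfer hlam hA ha hal T, h2.transfer hlam hA ha hal T, ?_, ?_, ?_⟩
  · rwa [I_transfer hlam T h1.cont]
  · rwa [I_transfer hlam T h2.cont]
  · exact funext fun x => transfer_sub hlam T f₁ f₂ x

lemma Good.sup {a M : ℝ} (ha : 0 ≤ a) {g : Circle1 → ℝ} (hg : Good a M g) (x : Circle1) :
    |g x| ≤ Real.exp a * M := by
  obtain ⟨f₁, f₂, h1, h2, i1, i2, rfl⟩ := hg
  have hE := Real.exp_pos a
  have a1 := h1.sup ha x
  have a2 := h2.sup ha x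
  have b1 := h1.nonneg x
  have b2 := h2.nonneg x
  have c1 := mul_le_mul_of_nonneg_left i1 hE.le
  have c2 := mul_le_mul_of_nonneg_left i2 hE.le
  exact abs_le.2 ⟨by linarith, by linarith⟩

lemma Good.lip {a M : ℝ} (ha : 0 ≤ a) {g : Circle1 → ℝ} (hg : Good a M g) (x y : Circle1) :
    |g x - g y| ≤ (2 * (a * Real.exp a * (Real.exp a * M))) * dist x y := by
  obtain ⟨f₁, f₂, h1, h2, i1, i2, rfl⟩ := hg
  have a1 := h1.lip ha x y
  have a2 := h2.lip ha x y
  have c1 : a * Real.exp a * (Real.exp a * I f₁) * dist x y ≤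
    a * Real.exp a * (Real.exp a * M) * dist x y := by gcongr
  have c2 : a * Real.exp a * (Real.exp a * I f₂) * dist x y ≤
    a * Real.exp a * (Real.exp a * M) * dist x y := by gcongr
  have e : f₁ x - f₂ x - (f₁ y - f₂ y) = (f₁ x - f₁ y) - (f₂ x - f₂ y) := by ring
  simp only [e]
  refine (abs_sub _ _).trans ?_
  linarith

lemma lip_facts {h : Circle1 → ℝ} (hh : ∃ K : NNReal, LipschitzWith K h) :
    0 ≤ lipConst h ∧ (∀ x, |h x| ≤ supNorm h) ∧
      ∀ x y, |h x - h y| ≤ lipConst h * dist x y := by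
  obtain ⟨K, hK⟩ := hh
  have hne : (K : ℝ) ∈ {L : ℝ | 0 ≤ L ∧ ∀ x y : Circle1, |h x - h y| ≤ L * dist x y} :=
    ⟨K.2, fun x y => by simpa [Real.dist_eq] using hK.dist_le_mul x y⟩
  refine ⟨Real.sInf_nonneg fun L hL => hL.1, fun x => ?_, fun x y => ?_⟩
  · obtain ⟨M, hM⟩ := isCompact_univ.exists_bound_of_continuousOn (hK.continuous.continuousOn (s := univ))
    refine le_ciSup (f := fun x => |h x|) ⟨M, ?_⟩ x
    rintro _ ⟨y, rfl⟩
    exact hM y trivial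
  · rcases eq_or_ne x y with rfl | hxy
    · simp
    · have hd := dist_pos.2 hxy
      rw [← div_le_iff₀ hd]
      exact le_csInf ⟨_, hne⟩ fun L hL => (div_le_iff₀ hd).2 (hL.2 x y)

lemma good_of_lip {a : ℝ} (ha : 1 ≤ a) {h : Circle1 → ℝ} (hh : ∃ K : NNReal, LipschitzWith K h) :
    Good a (3 * lipNorm h) h := by
  obtain ⟨h1, h2, h3⟩ := lip_facts hh
  have hcont : Continuous h := hh.choose_spec.continuous
  have hs : 0 ≤ supNorm h := (abs_nonneg _).trans (h2 0)
  have hN : lipNorm h = lipConst h + supNorm h := rfl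
  set N := lipNorm h
  have hN0 : 0 ≤ N := by linarith
  have hc : Cone a (fun x => h x + 2 * N) := by
    refine ⟨hcont.add continuous_const, fun x => ?_, fun s t => ?_⟩
    · have := abs_le.1 (h2 x); linarith
    · have k1 := (le_abs_self _).trans (h3 s t)
      have k2 := dist_coe_le s t
      have k3 := abs_le.1 (h2 t)
      have k4 := Real.add_one_le_exp (a * |s - t|)
      have k5 : |s - t| ≤ a * |s - t| := by nlinarith [abs_nonneg (s - t)]
      have k6 : lipConst h * dist (s : Circle1) t ≤ N * |s - t| :=
        mul_le_mul (by linarith) k2 dist_nonneg hN0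
      have k7 : N ≤ h t + 2 * N := by linarith
      have k8 : (|s - t| + 1) * (h t + 2 * N) ≤ Real.exp (a * |s - t|) * (h t + 2 * N) :=
        mul_le_mul_of_nonneg_right (by linarith) (by linarith)
      nlinarith [abs_nonneg (s - t)]
  refine ⟨_, _, hc, Cone.const (c := 2 * N) (by linarith) (by linarith), ?_, ?_, ?_⟩
  · have : I (fun x => h x + 2 * N) ≤ ∫ t in (0:ℝ)..1, 3 * N := by
      refine intervalIntegral.integral_mono_on (by norm_num)
        ((cont_lift hc.cont).intervalIntegrable _ _) (by simp) fun t _ => ?_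
      have := abs_le.1 (h2 t); linarith
    simpa using this
  · rw [I_const]; linarith
  · funext x; ring

lemma good_iter (hlam : 1 < lam) (hA : 0 < Astar) {a M : ℝ} (ha : 0 ≤ a)
    (hal : a + Astar ≤ lam * a) (Ts : ℕ → CM lam Astar) {g : Circle1 → ℝ} (hg : Good a M g)
    (k : ℕ) : Good a M (transferIter Ts k g) := by
  induction k with
  | zero => exact hg
  | succ k ih => exact ih.transfer hlam hA ha hal (Ts (k+1))

lemma tele (hlam : 1 < lam) (hA : 0 < Astar) {a M : ℝ} (ha : 0 ≤ a) (hM : 0 ≤ M)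
    (hal : a + Astar ≤ lam * a) (Ts Ts' : ℕ → CM lam Astar) {g : Circle1 → ℝ} (hg : Good a M g)
    (k : ℕ) : ∃ u : Circle1 → ℝ, Cone a u ∧
      I u = (Real.exp a * (9 + Astar)) * (2 * (a * Real.exp a * (Real.exp a * M)) + Real.exp a * M) *
        ∑ j ∈ Finset.Icc 1 k, dC1 (Ts j) (Ts' j) ∧
      ∀ x, |transferIter Ts k g x - transferIter Ts' k g x| ≤ u x := by
  induction k with
  | zero => exact ⟨fun _ => 0, Cone.const ha le_rfl, by simp [I_const], by simp [transferIter]⟩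
  | succ k ih =>
    obtain ⟨u, hu, hI, hle⟩ := ih
    set B := (Real.exp a * (9 + Astar)) *
      (2 * (a * Real.exp a * (Real.exp a * M)) + Real.exp a * M) with hB
    have hB0 : 0 ≤ B := by positivity
    have hd := dC1_nonneg (Ts (k+1)) (Ts' (k+1))
    have hc := (hu.transfer hlam hA ha hal (Ts (k+1)))
    refine ⟨fun x => transfer (Ts (k+1)) u x + B * dC1 (Ts (k+1)) (Ts' (k+1)),
      hc.add (Cone.const ha (by positivity)), ?_, fun x => ?_⟩
    · rw [I_add hc.cont continuous_const, I_const, I_transfer hlam _ hu.cont, hI,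
        Finset.sum_Icc_succ_top (by omega), mul_add]
    · have hgk := good_iter hlam hA ha hal Ts' hg k
      have k1 := pert hlam hA ha hal (Ts (k+1)) (Ts' (k+1)) (by positivity)
        (hgk.sup ha) (hgk.lip ha) x
      have k2 := transfer_abs_le hlam (Ts (k+1)) _ u hle x
      rw [transfer_sub hlam] at k2
      exact (abs_sub_le _ (transfer (Ts (k+1)) (transferIter Ts' k g) x) _).trans
        (add_le_add k2 k1)

end TP

/-- Lemma `lem:transfer_pert`.  Perturbation bounds for transfer operators,
`Lip → C⁰`: `‖(ℒ₁ − ℒ₂)h‖_∞ ≤ C‖h‖_Lip d_{C¹}(T₁,T₂)` and the telescoped bound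
`‖(ℒ_k⋯ℒ_1 − ℒ̃_k⋯ℒ̃_1)h‖_∞ ≤ C‖h‖_Lip Σ_{j=1}^k d_{C¹}(T_j, T̃_j)`. -/
theorem statement3 {lam Astar : ℝ} (hlam : 1 < lam) (hA : 0 < Astar) :
    ∃ C : ℝ, 0 < C ∧
      (∀ (T₁ T₂ : CM lam Astar) (h : Circle1 → ℝ), (∃ K : NNReal, LipschitzWith K h) →
        supNorm (fun x => transfer T₁ h x - transfer T₂ h x) ≤ C * lipNorm h * dC1 T₁ T₂) ∧
      (∀ k : ℕ, 1 ≤ k → ∀ (Ts Ts' : ℕ → CM lam Astar) (h : Circle1 → ℝ),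
        (∃ K : NNReal, LipschitzWith K h) →
        supNorm (fun x => transferIter Ts k h x - transferIter Ts' k h x) ≤
          C * lipNorm h * ∑ j ∈ Finset.Icc 1 k, dC1 (Ts j) (Ts' j)) := by
  obtain ⟨a, ha1, hal⟩ : ∃ a : ℝ, 1 ≤ a ∧ a + Astar ≤ lam * a := by
    have hl : 0 < lam - 1 := by linarith
    refine ⟨Astar / (lam - 1) + 1, by have : 0 < Astar / (lam - 1) := by positivity
                                      linarith, ?_⟩
    have : Astar / (lam - 1) * (lam - 1) = Astar := div_mul_cancel₀ _ hl.ne'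
    nlinarith
  have ha : 0 ≤ a := by linarith
  set C₁ := Real.exp a * (9 + Astar) with hC₁
  have hC₁0 : 0 < C₁ := by positivity
  set C₂ := Real.exp a * (C₁ * (2 * (a * Real.exp a * (Real.exp a * 3)) + Real.exp a * 3)) with hC₂
  have hC₂0 : 0 < C₂ := by positivity
  have hN : ∀ h : Circle1 → ℝ, (∃ K : NNReal, LipschitzWith K h) → 0 ≤ lipNorm h := by
    intro h hh
    obtain ⟨h1, h2, h3⟩ := TP.lip_facts hh
    exact add_nonneg h1 ((abs_nonneg _).trans (h2 0))
  refine ⟨C₁ + C₂, by positivity, ?_, ?_⟩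
  · intro T₁ T₂ h hh
    obtain ⟨h1, h2, h3⟩ := TP.lip_facts hh
    refine ciSup_le fun x => ?_
    refine (TP.pert hlam hA ha hal T₁ T₂ h1 h2 h3 x).trans ?_
    have := hN h hh
    have hd := TP.dC1_nonneg T₁ T₂
    change C₁ * lipNorm h * dC1 T₁ T₂ ≤ _
    have : 0 ≤ C₂ * lipNorm h * dC1 T₁ T₂ := by positivity
    linarith
  · intro k _ Ts Ts' h hh
    have h0 := hN h hh
    obtain ⟨u, hu, hI, hle⟩ := TP.tele hlam hA ha (by positivity : 0 ≤ 3 * lipNorm h) hal Ts Ts'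
      (TP.good_of_lip ha1 hh) k
    refine ciSup_le fun x => ?_
    refine (hle x).trans ((hu.sup ha x).trans ?_)
    have hd : 0 ≤ ∑ j ∈ Finset.Icc 1 k, dC1 (Ts j) (Ts' j) :=
      Finset.sum_nonneg fun j _ => TP.dC1_nonneg _ _
    rw [hI]
    have e : Real.exp a * (Real.exp a * (9 + Astar) * (2 * (a * Real.exp a *
        (Real.exp a * (3 * lipNorm h))) + Real.exp a * (3 * lipNorm h)) *
        ∑ j ∈ Finset.Icc 1 k, dC1 (Ts j) (Ts' j)) =
        C₂ * lipNorm h * ∑ j ∈ Finset.Icc 1 k, dC1 (Ts j) (Ts' j) := by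
      rw [hC₂, hC₁]; ring
    rw [e]
    have : 0 ≤ C₁ * lipNorm h * ∑ j ∈ Finset.Icc 1 k, dC1 (Ts j) (Ts' j) := by positivity
    linarith
end

section
/- There exists ϑ ∈ (0,1), depending only on λ and A*, such that for every L > 0 there is a constant C > 0 with the following property: for every sequence (T_i)_{i≥1} ⊂ 𝓜 with transfer operators ℒ_i and all ψ¹, ψ² ∈ 𝒟_L, one has ‖ℒ_k ⋯ ℒ_1(ψ¹ − ψ²)‖_{L¹(𝔪)} ≤ C ϑ^k for all k ≥ 0. -/
open MeasureTheory Filter Topology Set UniformConvergence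

namespace ML

variable {lam Astar : ℝ}

lemma F_diff (T : CM lam Astar) : Differentiable ℝ T.F := T.contDiff.differentiable (by norm_num)

lemma F_growth (T : CM lam Astar) {x y : ℝ} (h : x ≤ y) : lam * (y - x) ≤ T.F y - T.F x :=
  mul_sub_le_image_sub_of_le_deriv (F_diff T) T.expanding h

lemma F_strictMono (hlam : 1 < lam) (T : CM lam Astar) : StrictMono T.F := by
  intro x y h
  have := F_growth T h.le
  nlinarith [mul_pos (by linarith : (0:ℝ) < lam) (sub_pos.2 h)]

lemma F_add_int (T : CM lam Astar) (x : ℝ) (m : ℤ) : T.F (x + m) = T.F x + m * T.deg := by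
  induction m using Int.induction_on with
  | zero => simp
  | succ i ih =>
    have := T.lift_add_one (x + i)
    push_cast at *
    rw [← add_assoc, this, ih]; ring
  | pred i ih =>
    have := T.lift_add_one (x + (-i - 1))
    push_cast at *
    rw [show x + (-(i:ℝ) - 1) + 1 = x + -(i:ℝ) by ring, ih] at this
    linarith

lemma dF_add_int (T : CM lam Astar) (x : ℝ) (m : ℤ) : deriv T.F (x + m) = deriv T.F x := by
  have h1 : (fun y => T.F (y + m)) = fun y => T.F y + m * T.deg := by
    funext y; exact F_add_int T y m
  have h2 := deriv_comp_add_const T.F (m:ℝ) x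
  rw [← h2, h1, deriv_add_const]

lemma deg_pos (hlam : 1 < lam) (T : CM lam Astar) : 0 < T.deg := by
  have h := F_strictMono hlam T (show (0:ℝ) < 0 + 1 by norm_num)
  rw [T.lift_add_one] at h
  have : (0:ℝ) < T.deg := by linarith
  exact_mod_cast this

lemma coe_eq_iff (u v : ℝ) : (u : Circle1) = (v : Circle1) ↔ ∃ m : ℤ, u = v + m := by
  rw [← sub_eq_zero, ← AddCircle.coe_sub, AddCircle.coe_eq_zero_iff]
  constructor
  · rintro ⟨m, hm⟩; exact ⟨m, by simp at hm; linarith⟩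
  · rintro ⟨m, hm⟩; exact ⟨m, by simp; linarith⟩

lemma rep_exists (u : ℝ) : ∃ m : ℤ, ((AddCircle.equivIco 1 0 (u : Circle1) : ℝ)) = u + m := by
  rw [← coe_eq_iff]; exact AddCircle.coe_equivIco

lemma toMap_coe (T : CM lam Astar) (u : ℝ) : T.toMap (u : Circle1) = (T.F u : Circle1) := by
  obtain ⟨m, hm⟩ := rep_exists u
  unfold CM.toMap
  rw [hm, F_add_int, coe_eq_iff]
  exact ⟨m * T.deg, by push_cast; ring⟩

lemma dmap_coe (T : CM lam Astar) (u : ℝ) : T.dmap (u : Circle1) = deriv T.F u := by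
  obtain ⟨m, hm⟩ := rep_exists u
  unfold CM.dmap
  rw [hm, dF_add_int]

lemma exists_inv (hlam : 1 < lam) (T : CM lam Astar) : ∃ G : ℝ → ℝ,
    (∀ s, T.F (G s) = s) ∧ (∀ u, G (T.F u) = u) ∧ StrictMono G ∧
    (∀ s, HasDerivAt G (deriv T.F (G s))⁻¹ s) ∧
    (∀ s t, |G s - G t| ≤ |s - t| / lam) := by
  have hl : 0 < lam := by linarith
  have hsm := F_strictMono hlam T
  have hsurj : Function.Surjective T.F := by
    apply (F_diff T).continuous.surjective
    · apply tendsto_atTop_mono' atTop (f₁ := fun x => lam * x + T.F 0)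
      · filter_upwards [eventually_ge_atTop 0] with x hx
        have := F_growth T hx
        linarith
      · exact tendsto_atTop_add_const_right _ _ (tendsto_id.const_mul_atTop hl)
    · apply tendsto_atBot_mono' atBot (f₁ := fun x => lam * x + T.F 0)
      · filter_upwards [eventually_le_atBot 0] with x hx
        have := F_growth T hx
        linarith
      · exact tendsto_atBot_add_const_right _ _ (tendsto_id.const_mul_atBot hl)
  let e := StrictMono.orderIsoOfSurjective T.F hsm hsurj
  have h1 : ∀ s, T.F (e.symm s) = s := fun s => e.apply_symm_apply s
  refine ⟨e.symm, h1, fun u => e.symm_apply_apply u, e.symm.strictMono, ?_, ?_⟩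
  · intro s
    refine HasDerivAt.of_local_left_inverse e.symm.continuous.continuousAt
      ((F_diff T) _).hasDerivAt ?_ (Eventually.of_forall h1)
    have := T.expanding (e.symm s); linarith
  · have key : ∀ s t, s ≤ t → |e.symm s - e.symm t| ≤ |s - t| / lam := by
      intro s t hst
      have h2 := e.symm.monotone hst
      have h3 := F_growth T h2
      rw [h1, h1] at h3
      rw [abs_sub_comm, abs_sub_comm s, abs_of_nonneg (by linarith), abs_of_nonneg (by linarith),
        le_div_iff₀ hl]
      linarith
    intro s t
    rcases le_total s t with h | h
    · exact key s t h
    · rw [abs_sub_comm, abs_sub_comm s]; exact key t s h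

lemma transfer_formula (hlam : 1 < lam) (T : CM lam Astar) (G : ℝ → ℝ)
    (hFG : ∀ s, T.F (G s) = s) (hGF : ∀ u, G (T.F u) = u) (ψ : Circle1 → ℝ) (t : ℝ) :
    transfer T ψ (t : Circle1) =
      ∑ j ∈ Finset.range T.deg.toNat, ψ (G (t + j) : ℝ) / deriv T.F (G (t + j)) := by
  have hd := deg_pos hlam T
  have hn : ((T.deg.toNat : ℕ) : ℤ) = T.deg := Int.toNat_of_nonneg hd.le
  let e : Fin T.deg.toNat → {y : Circle1 // T.toMap y = (t : Circle1)} := fun j =>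
    ⟨((G (t + (j:ℕ)) : ℝ) : Circle1), by
      rw [toMap_coe, hFG, coe_eq_iff]; exact ⟨j, by push_cast; ring⟩⟩
  have he : Function.Bijective e := by
    constructor
    · intro i j hij
      have h1 := Subtype.ext_iff.1 hij
      simp only [e] at h1
      rw [coe_eq_iff] at h1
      obtain ⟨m, hm⟩ := h1
      have h2 := congrArg T.F hm
      rw [F_add_int, hFG, hFG] at h2
      have h3 : ((i:ℕ):ℤ) = (j:ℕ) + m * T.deg := by
        have : ((i:ℕ):ℝ) = (j:ℕ) + m * T.deg := by linarith
        exact_mod_cast this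
      have hi := i.2
      have hj := j.2
      have hi' : ((i:ℕ):ℤ) < T.deg := by omega
      have hj' : ((j:ℕ):ℤ) < T.deg := by omega
      have e1 : ((i:ℕ):ℤ) % T.deg = (i:ℕ) := Int.emod_eq_of_lt (by positivity) hi'
      have e2 : ((j:ℕ):ℤ) % T.deg = (j:ℕ) := Int.emod_eq_of_lt (by positivity) hj'
      have : ((i:ℕ):ℤ) = (j:ℕ) := by
        rw [← e1, ← e2, h3, Int.add_mul_emod_self_right]
      exact Fin.ext (by exact_mod_cast this)
    · rintro ⟨y, hy⟩
      obtain ⟨u, rfl⟩ := QuotientAddGroup.mk_surjective y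
      have hy' := hy
      change T.toMap (u : Circle1) = _ at hy'
      rw [toMap_coe, coe_eq_iff] at hy'
      obtain ⟨m, hm⟩ := hy'
      have hr0 := Int.emod_nonneg m hd.ne'
      have hr1 := Int.emod_lt_of_pos m hd
      refine ⟨⟨(m % T.deg).toNat, by omega⟩, ?_⟩
      apply Subtype.ext
      change ((G (t + ((m % T.deg).toNat : ℕ)) : ℝ) : Circle1) = (u : Circle1)
      have hc : (((m % T.deg).toNat : ℕ) : ℝ) = ((m % T.deg : ℤ) : ℝ) := by
        have : (((m % T.deg).toNat : ℕ) : ℤ) = m % T.deg := Int.toNat_of_nonneg hr0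
        exact_mod_cast this
      have h5 : T.F (u + ((-(m / T.deg) : ℤ) : ℝ)) = t + ((m % T.deg).toNat : ℕ) := by
        rw [F_add_int, hm, hc]
        have : (m : ℝ) = ((m % T.deg : ℤ) : ℝ) + T.deg * ((m / T.deg : ℤ) : ℝ) := by
          exact_mod_cast (Int.emod_add_mul_ediv m T.deg).symm
        push_cast
        linarith
      rw [← h5, hGF, coe_eq_iff]
      exact ⟨_, rfl⟩
  unfold transfer
  rw [← Equiv.tsum_eq (Equiv.ofBijective e he), tsum_fintype, Finset.sum_range]
  refine Finset.sum_congr rfl fun j _ => ?_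
  change ψ ((G (t + (j:ℕ)) : ℝ) : Circle1) / T.dmap ((G (t + (j:ℕ)) : ℝ) : Circle1) = _
  rw [dmap_coe]

lemma transfer_smul_sub (hlam : 1 < lam) (T : CM lam Astar) (c d : ℝ) (f g : Circle1 → ℝ) :
    transfer T (fun x => c * f x - d * g x) = fun x => c * transfer T f x - d * transfer T g x := by
  obtain ⟨G, hFG, hGF, -⟩ := exists_inv hlam T
  funext x
  obtain ⟨t, rfl⟩ := QuotientAddGroup.mk_surjective x
  simp only [transfer_formula hlam T G hFG hGF]
  rw [Finset.mul_sum, Finset.mul_sum, ← Finset.sum_sub_distrib]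
  refine Finset.sum_congr rfl fun j _ => ?_
  ring

lemma circ_integrable_iff (f : Circle1 → ℝ) (a : ℝ) :
    Integrable f volume ↔ IntegrableOn (fun t : ℝ => f (t : Circle1)) (Ioc a (a + 1)) := by
  have h1 := (AddCircle.measurePreserving_equivIoc (T := (1:ℝ)) (a := a))
  have h2 := h1.integrable_comp_emb (AddCircle.measurableEquivIoc 1 a).measurableEmbedding
    (g := fun t : Ioc a (a+1) => f ((t:ℝ) : Circle1))
  rw [integrableOn_iff_comap_subtypeVal measurableSet_Ioc]
  refine Iff.trans ?_ h2
  apply iff_of_eq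
  congr 1
  funext x
  simp only [Function.comp]
  congr 1
  exact (AddCircle.coe_equivIoc (a := a)).symm

lemma ae_ne (z : Circle1) : ∀ᵐ x : Circle1, x ≠ z := by
  have h := AddCircle.volume_closedBall (T := (1:ℝ)) (x := z) 0
  rw [Metric.closedBall_zero] at h
  rw [ae_iff]; simpa using h

lemma transfer_integral (hlam : 1 < lam) (T : CM lam Astar) (ψ : Circle1 → ℝ)
    (hψ : Integrable ψ volume) :
    Integrable (transfer T ψ) volume ∧ ∫ x, transfer T ψ x = ∫ x, ψ x := by
  obtain ⟨G, hFG, hGF, hGm, hGd, -⟩ := exists_inv hlam T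
  have hd := deg_pos hlam T
  have hn : ((T.deg.toNat : ℕ) : ℝ) = T.deg := by
    exact_mod_cast Int.toNat_of_nonneg hd.le
  set n := T.deg.toNat with hndef
  set b := T.F 0 with hb
  set H : ℝ → ℝ := fun s => ψ (G s : ℝ) / deriv T.F (G s) with hH
  have hF1 : T.F (0 + 1) = b + n := by rw [T.lift_add_one, hn]
  have himg : G '' (Ioc b (b + n)) = Ioc (0:ℝ) (0 + 1) := by
    ext u
    constructor
    · rintro ⟨s, hs, rfl⟩
      have h1 := hGm hs.1
      have h2 := hGm.monotone hs.2
      rw [hb, hGF] at h1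
      rw [← hF1, hGF] at h2
      exact ⟨h1, h2⟩
    · intro hu
      refine ⟨T.F u, ⟨F_strictMono hlam T hu.1, ?_⟩, hGF u⟩
      rw [← hF1]
      exact (F_strictMono hlam T).monotone hu.2
  have hHe : (fun s => |(deriv T.F (G s))⁻¹| • ψ (G s : ℝ)) = H := by
    funext s
    have := T.expanding (G s)
    rw [abs_of_pos (inv_pos.2 (by linarith)), smul_eq_mul, hH]
    field_simp
  have hHi : IntegrableOn H (Ioc b (b + n)) := by
    have := (integrableOn_image_iff_integrableOn_abs_deriv_smul measurableSet_Ioc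
      (fun s _ => (hGd s).hasDerivWithinAt) hGm.injective.injOn
      (fun u : ℝ => ψ (u : Circle1)) (s := Ioc b (b+n)))
    rw [himg, hHe] at this
    exact this.1 ((circ_integrable_iff ψ 0).1 hψ)
  have hHint : ∫ s in Ioc b (b + n), H s = ∫ x, ψ x := by
    have := (integral_image_eq_integral_abs_deriv_smul measurableSet_Ioc
      (fun s _ => (hGd s).hasDerivWithinAt) hGm.injective.injOn
      (fun u : ℝ => ψ (u : Circle1)) (s := Ioc b (b+n)))
    rw [himg, hHe] at this
    rw [← this]
    exact AddCircle.integral_preimage 1 0 ψ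
  have hf : (fun t : ℝ => transfer T ψ (t : Circle1)) =
      fun t => ∑ j ∈ Finset.range n, H (t + j) := by
    funext t
    exact transfer_formula hlam T G hFG hGF ψ t
  have hj : ∀ j < n, IntervalIntegrable H volume (b + j) (b + (j + 1 : ℕ)) := by
    intro j hjn
    rw [intervalIntegrable_iff_integrableOn_Ioc_of_le (by push_cast; linarith)]
    apply hHi.mono_set
    apply Ioc_subset_Ioc
    · linarith [Nat.cast_nonneg (α := ℝ) j]
    · have : ((j+1:ℕ):ℝ) ≤ n := by exact_mod_cast hjn
      linarith
  have hj' : ∀ j ∈ Finset.range n, IntervalIntegrable (fun t => H (t + j)) volume b (b + 1) := by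
    intro j hjn
    have := (hj j (Finset.mem_range.1 hjn)).comp_add_right (j:ℝ)
    convert this using 1
    · ring
    · push_cast; ring
  have hint : IntervalIntegrable (fun t : ℝ => transfer T ψ (t : Circle1)) volume b (b + 1) := by
    rw [hf]
    have h1 := IntervalIntegrable.sum (Finset.range n) hj'
    have h2 : (fun t : ℝ => ∑ j ∈ Finset.range n, H (t + j)) =
        ∑ j ∈ Finset.range n, fun t : ℝ => H (t + j) := by
      funext t
      simp
    rw [h2]
    exact h1
  constructor
  · rw [circ_integrable_iff _ b,
      ← intervalIntegrable_iff_integrableOn_Ioc_of_le (by linarith)]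
    exact hint
  · rw [← AddCircle.integral_preimage 1 b, ← hHint, ← intervalIntegral.integral_of_le (by linarith),
      hf, intervalIntegral.integral_finsetSum hj',
      ← intervalIntegral.integral_of_le (by linarith [Nat.cast_nonneg (α := ℝ) n])]
    have := intervalIntegral.sum_integral_adjacent_intervals (a := fun j : ℕ => b + j) (n := n)
      (f := H) (μ := volume) (fun k hk => hj k hk)
    simp only [Nat.cast_zero, add_zero] at this
    rw [← this]
    refine Finset.sum_congr rfl fun j _ => ?_
    rw [intervalIntegral.integral_comp_add_right]
    congr 1
    push_cast; ring

/-- Auxiliary class of densities. -/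
def D (L : ℝ) (φ : Circle1 → ℝ) : Prop :=
  Integrable φ volume ∧ ∫ x, φ x = 1 ∧ ∃ z : Circle1, (∀ x, x ≠ z → 0 < φ x) ∧
    ∀ x y, x ≠ z → y ≠ z → φ x ≤ Real.exp (L * arcDist z x y) * φ y

lemma arcDist_nonneg (z x y : Circle1) : 0 ≤ arcDist z x y := abs_nonneg _

lemma arcDist_le_one (z x y : Circle1) : arcDist z x y ≤ 1 := by
  unfold arcDist arcCoord
  have h1 := (AddCircle.equivIoc 1 (zrep z) x).2
  have h2 := (AddCircle.equivIoc 1 (zrep z) y).2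
  rw [abs_le]
  constructor <;> linarith [h1.1, h1.2, h2.1, h2.2]

lemma D_mono {L L' : ℝ} (h : L ≤ L') {φ : Circle1 → ℝ} (hφ : D L φ) : D L' φ := by
  obtain ⟨h1, h2, z, h3, h4⟩ := hφ
  refine ⟨h1, h2, z, h3, fun x y hx hy => (h4 x y hx hy).trans ?_⟩
  have := h3 y hy
  have := arcDist_nonneg z x y
  gcongr

lemma D_of_memD {L : ℝ} {ψ : Circle1 → ℝ} (h : memD L ψ) : D L ψ := by
  obtain ⟨⟨h1, h2, -⟩, h3, z, h4⟩ := h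
  refine ⟨h1, h2, z, fun x _ => h3 x, fun x y hx hy => ?_⟩
  have h5 := (abs_le.1 (h4 x y hx hy)).2
  rw [← Real.exp_log (h3 x)]
  rw [show Real.exp (L * arcDist z x y) * ψ y =
    Real.exp (L * arcDist z x y) * Real.exp (Real.log (ψ y)) by rw [Real.exp_log (h3 y)]]
  rw [← Real.exp_add]
  apply Real.exp_le_exp.2
  linarith

lemma D_l1 {L : ℝ} {φ₁ φ₂ : Circle1 → ℝ} (h1 : D L φ₁) (h2 : D L φ₂) :
    ∫ x, |φ₁ x - φ₂ x| ≤ 2 := by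
  obtain ⟨i1, e1, z1, p1, -⟩ := h1
  obtain ⟨i2, e2, z2, p2, -⟩ := h2
  calc ∫ x, |φ₁ x - φ₂ x| ≤ ∫ x, (φ₁ x + φ₂ x) := by
        apply integral_mono_ae (i1.sub i2).abs (i1.add i2)
        filter_upwards [ae_ne z1, ae_ne z2] with x hx1 hx2
        have := p1 x hx1
        have := p2 x hx2
        change |φ₁ x - φ₂ x| ≤ φ₁ x + φ₂ x
        rw [abs_le]; constructor <;> linarith
    _ = 2 := by rw [integral_add i1 i2, e1, e2]; norm_num

lemma vol_real : (volume : Measure Circle1).real univ = 1 := by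
  simp [Measure.real, AddCircle.measure_univ]

lemma D_lower {L : ℝ} (hL : 0 ≤ L) {φ : Circle1 → ℝ} (hi : Integrable φ volume)
    (h1 : ∫ x, φ x = 1) {z : Circle1} (hp : ∀ x, x ≠ z → 0 < φ x)
    (hl : ∀ x y, x ≠ z → y ≠ z → φ x ≤ Real.exp (L * arcDist z x y) * φ y)
    {y : Circle1} (hy : y ≠ z) : 1 ≤ Real.exp L * φ y := by
  have := hp y hy
  calc (1:ℝ) = ∫ x, φ x := h1.symm
    _ ≤ ∫ _x : Circle1, Real.exp L * φ y := by
        apply integral_mono_ae hi (integrable_const _)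
        filter_upwards [ae_ne z] with x hx
        refine (hl x y hx hy).trans ?_
        have := arcDist_le_one z x y
        gcongr
        nlinarith
    _ = Real.exp L * φ y := by rw [integral_const, vol_real]; simp

lemma D_sub {L κ r : ℝ} (hL : 0 ≤ L) (hκ : 0 < κ) (hr : r < 1) (hκr : κ * Real.exp L = r)
    {φ : Circle1 → ℝ} (h : D L φ) : D (L / (1 - r)) (fun x => (1 - κ)⁻¹ * (φ x - κ)) := by
  have hκ1 : κ < 1 := by
    have := Real.one_le_exp hL
    nlinarith
  have hc : 0 < (1 - κ)⁻¹ := inv_pos.2 (by linarith)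
  obtain ⟨hi, h1, z, hp, hl⟩ := h
  have hlow : ∀ y, y ≠ z → κ ≤ r * φ y := by
    intro y hy
    have := D_lower hL hi h1 hp hl hy
    rw [← hκr]
    nlinarith
  refine ⟨(hi.sub (integrable_const κ)).const_mul _, ?_, z, ?_, ?_⟩
  · rw [integral_const_mul, integral_sub hi (integrable_const κ), h1, integral_const, vol_real]
    simp
    exact inv_mul_cancel₀ (by linarith)
  · intro x hx
    have h2 := hlow x hx
    have h3 := hp x hx
    apply mul_pos hc
    nlinarith
  · intro x y hx hy
    have h2 := hlow y hy
    have h3 := hp y hy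
    have h4 := hl x y hx hy
    have hd := arcDist_nonneg z x y
    set d := arcDist z x y
    have hr0 : 0 < r := by rw [← hκr]; positivity
    have hE1 : 1 ≤ Real.exp (L / (1 - r) * d) :=
      Real.one_le_exp (mul_nonneg (div_nonneg hL (by linarith)) hd)
    have hcv := convexOn_exp.2 (mem_univ (L / (1 - r) * d)) (mem_univ (0:ℝ))
      (by linarith : 0 ≤ 1 - r) hr0.le (by ring)
    have heq : (1 - r) * (L / (1 - r) * d) = L * d := by
      have : 1 - r ≠ 0 := by linarith
      field_simp
    simp only [smul_eq_mul, mul_zero, add_zero, Real.exp_zero, mul_one, heq] at hcv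
    set E := Real.exp (L / (1 - r) * d)
    set e := Real.exp (L * d)
    have : φ x - κ ≤ E * (φ y - κ) := by
      nlinarith [mul_le_mul_of_nonneg_right hcv h3.le,
        mul_le_mul_of_nonneg_left h2 (by linarith : 0 ≤ E - 1)]
    calc (1 - κ)⁻¹ * (φ x - κ) ≤ (1 - κ)⁻¹ * (E * (φ y - κ)) :=
          mul_le_mul_of_nonneg_left this hc.le
      _ = _ := by ring

lemma dF_lip (T : CM lam Astar) (u v : ℝ) :
    |deriv T.F u - deriv T.F v| ≤ Astar * |u - v| := by
  have hd : Differentiable ℝ (deriv T.F) := by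
    have h : ContDiff ℝ (1+1) T.F := by
      have := T.contDiff; norm_num; exact this
    exact (contDiff_succ_iff_deriv.1 h).2.2.differentiable (by norm_num)
  have := Convex.norm_image_sub_le_of_norm_deriv_le (f := deriv T.F) (C := Astar) (s := univ)
    (x := v) (y := u) (fun x _ => hd x) (fun x _ => T.second_bound x) convex_univ
    (mem_univ _) (mem_univ _)
  simpa [Real.norm_eq_abs] using this

lemma inv_dF_bound (hlam : 1 < lam) (hA : 0 < Astar) (T : CM lam Astar) (u v : ℝ) :
    (deriv T.F u)⁻¹ ≤ Real.exp (Astar / lam * |u - v|) * (deriv T.F v)⁻¹ := by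
  have h1 := T.expanding u
  have h2 := T.expanding v
  have h3 := (abs_le.1 (dF_lip T u v)).1
  have h4 := Real.add_one_le_exp (Astar / lam * |u - v|)
  have hl : 0 < lam := by linarith
  have hu : 0 < deriv T.F u := by linarith
  have hv : 0 < deriv T.F v := by linarith
  rw [← div_eq_mul_inv, le_div_iff₀ hv, inv_mul_le_iff₀ hu]
  have h5 : Astar * |u - v| ≤ deriv T.F u * (Astar / lam * |u - v|) := by
    have : Astar * |u - v| = lam * (Astar / lam * |u - v|) := by field_simp
    rw [this]
    have : 0 ≤ Astar / lam * |u - v| := by positivity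
    gcongr
  nlinarith [mul_le_mul_of_nonneg_left h4 hu.le]

lemma arcCoord_coe (z : Circle1) {u : ℝ} (hu : u ∈ Ioo (zrep z) (zrep z + 1)) :
    arcCoord z (u : Circle1) = u ∧ (u : Circle1) ≠ z := by
  constructor
  · unfold arcCoord
    rw [AddCircle.equivIoc_coe_eq ⟨hu.1, hu.2.le⟩]
  · intro h
    have hz : ((zrep z : ℝ) : Circle1) = z := AddCircle.coe_equivIco
    rw [← hz, coe_eq_iff] at h
    obtain ⟨m, hm⟩ := h
    have h1 := hu.1
    have h2 := hu.2
    rw [hm] at h1 h2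
    have h3 : (0:ℝ) < m := by linarith
    have h4 : (m:ℝ) < 1 := by linarith
    have h3' : 0 < m := by exact_mod_cast h3
    have h4' : m < 1 := by exact_mod_cast h4
    omega

lemma arcCoord_mem (z x : Circle1) (hx : x ≠ z) :
    arcCoord z x ∈ Ioo (zrep z) (zrep z + 1) ∧ ((arcCoord z x : ℝ) : Circle1) = x := by
  have hc : ((arcCoord z x : ℝ) : Circle1) = x := AddCircle.coe_equivIoc
  have hm := (AddCircle.equivIoc 1 (zrep z) x).2
  change arcCoord z x ∈ _ at hm
  refine ⟨⟨hm.1, lt_of_le_of_ne hm.2 fun h => hx ?_⟩, hc⟩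
  have hz : ((zrep z : ℝ) : Circle1) = z := AddCircle.coe_equivIco
  rw [← hc, h, ← hz, coe_eq_iff]
  rw [hz]
  exact ⟨1, by simp⟩

lemma D_transfer (hlam : 1 < lam) (hA : 0 < Astar) (T : CM lam Astar) {L : ℝ} (hL : 0 ≤ L)
    {φ : Circle1 → ℝ} (h : D L φ) : D ((L + Astar / lam) / lam) (transfer T φ) := by
  obtain ⟨hi, h1, z, hp, hl⟩ := h
  obtain ⟨hi', h1'⟩ := transfer_integral hlam T φ hi
  obtain ⟨G, hFG, hGF, hGm, -, hGl⟩ := exists_inv hlam T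
  have hd := deg_pos hlam T
  have hl0 : 0 < lam := by linarith
  have hn : ((T.deg.toNat : ℕ) : ℝ) = T.deg := by
    exact_mod_cast Int.toNat_of_nonneg hd.le
  have hn0 : 0 < T.deg.toNat := by omega
  obtain ⟨m, hm⟩ : ∃ m : ℤ, T.F (zrep z) = zrep (T.toMap z) + m := by
    rw [← coe_eq_iff]
    exact (AddCircle.coe_equivIco (y := T.toMap z) (a := (0:ℝ))).symm
  have hform : ∀ t : ℝ, transfer T φ (t : Circle1) = ∑ j ∈ Finset.range T.deg.toNat,
      φ (G (t + m + j) : ℝ) / deriv T.F (G (t + m + j)) := by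
    intro t
    rw [← transfer_formula hlam T G hFG hGF φ]
    congr 1
    rw [coe_eq_iff]
    exact ⟨-m, by push_cast; ring⟩
  have hG : ∀ t ∈ Ioo (zrep (T.toMap z)) (zrep (T.toMap z) + 1),
      ∀ j ∈ Finset.range T.deg.toNat, G (t + m + j) ∈ Ioo (zrep z) (zrep z + 1) := by
    intro t ht j hj
    have hj' : ((j+1:ℕ):ℝ) ≤ T.deg.toNat := by exact_mod_cast Finset.mem_range.1 hj
    push_cast at hj'
    have hj0 := Nat.cast_nonneg (α := ℝ) j
    constructor
    · rw [← hGF (zrep z)]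
      apply hGm
      linarith [ht.1]
    · rw [← hGF (zrep z + 1)]
      apply hGm
      rw [T.lift_add_one]
      linarith [ht.2]
  refine ⟨hi', h1'.trans h1, T.toMap z, ?_, ?_⟩
  · intro x hx
    obtain ⟨hx1, hx2⟩ := arcCoord_mem _ x hx
    rw [← hx2, hform]
    apply Finset.sum_pos _ ⟨0, Finset.mem_range.2 hn0⟩
    intro j hj
    have := T.expanding (G (arcCoord (T.toMap z) x + m + j))
    exact div_pos (hp _ (arcCoord_coe z (hG _ hx1 j hj)).2) (by linarith)
  · intro x y hx hy
    obtain ⟨hx1, hx2⟩ := arcCoord_mem _ x hx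
    obtain ⟨hy1, hy2⟩ := arcCoord_mem _ y hy
    unfold arcDist
    set s := arcCoord (T.toMap z) x
    set t := arcCoord (T.toMap z) y
    rw [← hx2, ← hy2, hform, hform, Finset.mul_sum]
    apply Finset.sum_le_sum
    intro j hj
    obtain ⟨c1, n1⟩ := arcCoord_coe z (hG _ hx1 j hj)
    obtain ⟨c2, n2⟩ := arcCoord_coe z (hG _ hy1 j hj)
    have k1 := hl _ _ n1 n2
    have k2 := hp _ n2
    have k0 := hp _ n1
    unfold arcDist at k1
    rw [c1, c2] at k1
    have k3 := hGl (s + m + j) (t + m + j)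
    rw [show s + m + j - (t + m + j) = s - t by ring] at k3
    have k4 := inv_dF_bound hlam hA T (G (s + m + j)) (G (t + m + j))
    have e1 := T.expanding (G (s + m + j))
    have e2 := T.expanding (G (t + m + j))
    set u := G (s + m + j)
    set v := G (t + m + j)
    have i1 : 0 < (deriv T.F u)⁻¹ := inv_pos.2 (by linarith)
    have i2 : 0 < (deriv T.F v)⁻¹ := inv_pos.2 (by linarith)
    rw [div_eq_mul_inv, div_eq_mul_inv]
    calc φ (u : Circle1) * (deriv T.F u)⁻¹
        ≤ (Real.exp (L * |u - v|) * φ (v : Circle1)) *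
          (Real.exp (Astar / lam * |u - v|) * (deriv T.F v)⁻¹) := by gcongr
      _ = Real.exp ((L + Astar / lam) * |u - v|) * (φ (v : Circle1) * (deriv T.F v)⁻¹) := by
          rw [add_mul, Real.exp_add]; ring
      _ ≤ _ := by
          have : (L + Astar / lam) * |u - v| ≤ (L + Astar / lam) / lam * |s - t| := by
            have h0 : 0 ≤ L + Astar / lam := by positivity
            calc _ ≤ (L + Astar / lam) * (|s - t| / lam) := by gcongr
              _ = _ := by ring
          have := Real.exp_le_exp.2 this
          exact mul_le_mul_of_nonneg_right this (by positivity)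

end ML

/-- Lemma `lem:memory_loss`.  Exponential memory loss: there is
`ϑ ∈ (0,1)` (depending only on `λ, A*`) such that for every `L > 0` there is `C > 0` with
`‖ℒ_k⋯ℒ_1(ψ¹ − ψ²)‖_{L¹(𝔪)} ≤ Cϑᵏ` for all `ψ¹, ψ² ∈ 𝒟_L`, all sequences of maps of `𝓜`,
and all `k ≥ 0`. -/
theorem statement4 {lam Astar : ℝ} (hlam : 1 < lam) (hA : 0 < Astar) :
    ∃ θ : ℝ, θ ∈ Set.Ioo (0 : ℝ) 1 ∧
      ∀ L : ℝ, 0 < L → ∃ C : ℝ, 0 < C ∧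
        ∀ (Ts : ℕ → CM lam Astar) (ψ₁ ψ₂ : Circle1 → ℝ), memD L ψ₁ → memD L ψ₂ →
          ∀ k : ℕ, l1norm (transferIter Ts k (fun x => ψ₁ x - ψ₂ x)) ≤ C * θ ^ k := by
  have hl0 : 0 < lam := by linarith
  set Ls := Astar / (lam * (lam - 1)) with hLs
  have hLs0 : 0 < Ls := by
    have : 0 < lam - 1 := by linarith
    positivity
  have hfix : ∀ ε : ℝ, (Ls + ε + Astar / lam) / lam = Ls + ε / lam := by
    intro ε
    have : lam - 1 ≠ 0 := by linarith
    rw [hLs]; field_simp; ring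
  set L0 := Ls + 1 with hL0
  set r := (lam - 1) / (L0 + lam - 1) with hr
  have hden : 0 < L0 + lam - 1 := by linarith
  have hr0 : 0 < r := div_pos (by linarith) hden
  have hr1 : r < 1 := by rw [hr, div_lt_one hden]; linarith
  set κ := r * Real.exp (-L0) with hκ
  have hκ0 : 0 < κ := by positivity
  have hκr : κ * Real.exp L0 = r := by
    rw [hκ, mul_assoc, ← Real.exp_add]; simp
  have hκ1 : κ < 1 := by
    have : Real.exp (-L0) ≤ 1 := Real.exp_le_one_iff.2 (by linarith)
    nlinarith
  have hLr : L0 / (1 - r) = Ls + lam := by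
    have h1 : 1 - r = L0 / (L0 + lam - 1) := by
      rw [hr]; field_simp; ring
    have : L0 ≠ 0 := by linarith
    rw [h1]; field_simp; rw [hL0]; ring
  refine ⟨1 - κ, ⟨by linarith, by linarith⟩, fun L hL => ?_⟩
  obtain ⟨n0, hn0⟩ : ∃ n0 : ℕ, L / lam ^ n0 ≤ 1 := by
    obtain ⟨n, hn⟩ := pow_unbounded_of_one_lt L hlam
    exact ⟨n, by rw [div_le_one (by positivity)]; exact hn.le⟩
  have hθ : 0 < 1 - κ := by linarith
  refine ⟨2 * ((1 - κ) ^ n0)⁻¹, by positivity, fun Ts ψ₁ ψ₂ h1 h2 => ?_⟩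
  have ph1 : ∀ k : ℕ, ∃ φ₁ φ₂ : Circle1 → ℝ, ML.D (Ls + L / lam ^ k) φ₁ ∧
      ML.D (Ls + L / lam ^ k) φ₂ ∧
      transferIter Ts k (fun x => ψ₁ x - ψ₂ x) = fun x => φ₁ x - φ₂ x := by
    intro k
    induction k with
    | zero =>
      refine ⟨ψ₁, ψ₂, ML.D_mono ?_ (ML.D_of_memD h1), ML.D_mono ?_ (ML.D_of_memD h2), rfl⟩ <;>
      · simp; linarith
    | succ k ih =>
      obtain ⟨φ₁, φ₂, d1, d2, he⟩ := ih
      have hnn : 0 ≤ Ls + L / lam ^ k := by positivity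
      have key : (Ls + L / lam ^ k + Astar / lam) / lam ≤ Ls + L / lam ^ (k+1) := by
        rw [hfix, pow_succ, div_div]
      refine ⟨_, _, ML.D_mono key (ML.D_transfer hlam hA (Ts (k+1)) hnn d1),
        ML.D_mono key (ML.D_transfer hlam hA (Ts (k+1)) hnn d2), ?_⟩
      have := ML.transfer_smul_sub hlam (Ts (k+1)) 1 1 φ₁ φ₂
      simp only [one_mul] at this
      rw [transferIter, he, this]
  have ph2 : ∀ j : ℕ, ∃ φ₁ φ₂ : Circle1 → ℝ, ML.D L0 φ₁ ∧ ML.D L0 φ₂ ∧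
      transferIter Ts (n0 + j) (fun x => ψ₁ x - ψ₂ x) =
        fun x => (1 - κ) ^ j * φ₁ x - (1 - κ) ^ j * φ₂ x := by
    intro j
    induction j with
    | zero =>
      obtain ⟨φ₁, φ₂, d1, d2, he⟩ := ph1 n0
      exact ⟨φ₁, φ₂, ML.D_mono (by linarith) d1, ML.D_mono (by linarith) d2, by simpa using he⟩
    | succ j ih =>
      obtain ⟨φ₁, φ₂, d1, d2, he⟩ := ih
      have hnn : 0 ≤ Ls + lam := by linarith
      have s1 := ML.D_sub (by linarith) hκ0 hr1 hκr d1
      have s2 := ML.D_sub (by linarith) hκ0 hr1 hκr d2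
      rw [hLr] at s1 s2
      have t1 := ML.D_transfer hlam hA (Ts (n0 + j + 1)) hnn s1
      have t2 := ML.D_transfer hlam hA (Ts (n0 + j + 1)) hnn s2
      rw [hfix lam, div_self hl0.ne'] at t1 t2
      refine ⟨_, _, t1, t2, ?_⟩
      rw [← ML.transfer_smul_sub hlam]
      rw [← add_assoc, transferIter, he]
      congr 1
      funext x
      have : (1 - κ) * (1 - κ)⁻¹ = 1 := mul_inv_cancel₀ hθ.ne'
      rw [pow_succ]
      linear_combination (-(1 - κ) ^ j * (φ₁ x - φ₂ x)) * this
  intro k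
  have hC : 2 * ((1 - κ) ^ n0)⁻¹ * (1 - κ) ^ n0 = 2 := by
    field_simp
  rcases le_total k n0 with hk | hk
  · obtain ⟨φ₁, φ₂, d1, d2, he⟩ := ph1 k
    rw [l1norm, he]
    refine (ML.D_l1 d1 d2).trans ?_
    have : (1 - κ) ^ n0 ≤ (1 - κ) ^ k := pow_le_pow_of_le_one hθ.le (by linarith) hk
    calc (2:ℝ) = 2 * ((1 - κ) ^ n0)⁻¹ * (1 - κ) ^ n0 := hC.symm
      _ ≤ _ := mul_le_mul_of_nonneg_left this (by positivity)
  · obtain ⟨j, rfl⟩ := Nat.exists_eq_add_of_le hk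
    obtain ⟨φ₁, φ₂, d1, d2, he⟩ := ph2 j
    rw [l1norm, he, pow_add, ← mul_assoc, hC]
    have hp : 0 < (1 - κ) ^ j := by positivity
    have : ∀ x, |(1 - κ) ^ j * φ₁ x - (1 - κ) ^ j * φ₂ x| = (1 - κ) ^ j * |φ₁ x - φ₂ x| := by
      intro x
      rw [← mul_sub, abs_mul, abs_of_pos hp]
    simp only [this]
    rw [integral_const_mul, mul_comm]
    exact mul_le_mul_of_nonneg_right (ML.D_l1 d1 d2) hp.le
end
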